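/- arXiv:2509.18964 — 7 statements merged into one kernel-verified Lean document; each statement's English description precedes it below -/
import Mathlib

section
/- Sandwich property of asynchronous Q-learning errors (Lemma 1). In the finite MDP setting, let p : S×A → [0,1], let D be the diagonal operator on ℝ^{S×A} with (DQ)(s,a) = p(s,a)Q(s,a), let Q* satisfy T(Q*) = Q*, let π* be greedy with respect to Q*, and for each k ≥ 0 let π_k be greedy with respect to Q_k. Suppose the iterates satisfy Q_{k+1} = Q_k + α_k(F_k − Q_k) with α_k ∈ [0,1] and arbitrary F_k ∈ ℝ^{S×A}, and set F̄_k := D T(Q_k) + (I−D)Q_k and Δ_k := Q_k − Q*. Define Δ↑_0 = Δ↓_0 = Δ_0 and Δ↑_{k+1} = (I − α_k D + α_k γ D P^{π*}) Δ↑_k + α_k γ D (P^{π_k} − P^{π*}) Δ_k + α_k (F_k − F̄_k), and Δ↓_{k+1} = (I − α_k D + α_k γ D P^{π*}) Δ↓_k + α_k (F_k − F̄_k). Then Δ↓_k ≤ Δ_k ≤ Δ↑_k entrywise for every k ≥ 0. -/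
open Finset

/-- Sandwich property of asynchronous Q-learning errors (Lemma 1). -/
theorem sandwich_property_asynchronous_Q_learning
    {S A : Type*} [Fintype S] [Fintype A] [Nonempty S] [Nonempty A]
    (P : S → A → S → ℝ)
    (hPnn : ∀ s a s', 0 ≤ P s a s')
    (hPsum : ∀ s a, ∑ s', P s a s' = 1)
    (r : S → A → ℝ) (γ : ℝ) (hγ0 : 0 ≤ γ) (hγ1 : γ < 1)
    (p : S → A → ℝ) (hp0 : ∀ s a, 0 ≤ p s a) (hp1 : ∀ s a, p s a ≤ 1)
    -- Bellman optimality operator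
    (T : (S → A → ℝ) → (S → A → ℝ))
    (hT : ∀ Q s a, T Q s a =
      r s a + γ * ∑ s', P s a s' * (univ.sup' univ_nonempty (fun a' => Q s' a')))
    -- the linear map P^π induced by a deterministic policy π
    (Pol : (S → A) → (S → A → ℝ) → (S → A → ℝ))
    (hPol : ∀ π Q s a, Pol π Q s a = ∑ s', P s a s' * Q s' (π s'))
    -- optimal Q-function and a greedy optimal policy
    (Qstar : S → A → ℝ) (hQstar : ∀ s a, T Qstar s a = Qstar s a)
    (πstar : S → A)
    (hπstar : ∀ s, Qstar s (πstar s) = univ.sup' univ_nonempty (fun a => Qstar s a))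
    -- the iterates
    (Q : ℕ → S → A → ℝ) (α : ℕ → ℝ) (hα0 : ∀ k, 0 ≤ α k) (hα1 : ∀ k, α k ≤ 1)
    (F : ℕ → S → A → ℝ)
    (hQrec : ∀ k s a, Q (k+1) s a = Q k s a + α k * (F k s a - Q k s a))
    -- greedy policies w.r.t. the iterates
    (πk : ℕ → S → A)
    (hπk : ∀ k s, Q k s (πk k s) = univ.sup' univ_nonempty (fun a => Q k s a))
    -- expected operator F̄_k = D T(Q_k) + (I - D) Q_k
    (Fbar : ℕ → S → A → ℝ)
    (hFbar : ∀ k s a, Fbar k s a = p s a * T (Q k) s a + (1 - p s a) * Q k s a)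
    -- the upper and lower comparison processes
    (Δup Δdown : ℕ → S → A → ℝ)
    (hup0 : ∀ s a, Δup 0 s a = Q 0 s a - Qstar s a)
    (hdown0 : ∀ s a, Δdown 0 s a = Q 0 s a - Qstar s a)
    (hup : ∀ k s a, Δup (k+1) s a =
      Δup k s a - α k * (p s a * Δup k s a) + α k * γ * (p s a * Pol πstar (Δup k) s a)
      + α k * γ * (p s a *
          (Pol (πk k) (fun s' a' => Q k s' a' - Qstar s' a') s a
            - Pol πstar (fun s' a' => Q k s' a' - Qstar s' a') s a))
      + α k * (F k s a - Fbar k s a))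
    (hdown : ∀ k s a, Δdown (k+1) s a =
      Δdown k s a - α k * (p s a * Δdown k s a) + α k * γ * (p s a * Pol πstar (Δdown k) s a)
      + α k * (F k s a - Fbar k s a)) :
    ∀ k s a, Δdown k s a ≤ Q k s a - Qstar s a ∧ Q k s a - Qstar s a ≤ Δup k s a := by
  intro k
  induction k with
  | zero => intro s a; rw [hup0, hdown0]; exact ⟨le_rfl, le_rfl⟩
  | succ k ih =>
    intro s a
    have hq := hQstar s a
    rw [hT] at hq
    have hl : ∑ s', P s a s' * Qstar s' (πstar s') + Pol πstar (Δdown k) s a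
        ≤ ∑ s', P s a s' * Q k s' (πk k s') := by
      rw [hPol, ← Finset.sum_add_distrib]
      refine Finset.sum_le_sum fun s' _ => ?_
      rw [← mul_add]
      refine mul_le_mul_of_nonneg_left ?_ (hPnn s a s')
      have h1 := (ih s' (πstar s')).1
      have h2 : Q k s' (πstar s') ≤ Q k s' (πk k s') := by
        rw [hπk]; exact Finset.le_sup' (fun a => Q k s' a) (Finset.mem_univ _)
      linarith
    have hu : ∑ s', P s a s' * Q k s' (πk k s') ≤
        ∑ s', P s a s' * Qstar s' (πstar s') + (Pol πstar (Δup k) s a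
          + (Pol (πk k) (fun s' a' => Q k s' a' - Qstar s' a') s a
            - Pol πstar (fun s' a' => Q k s' a' - Qstar s' a') s a)) := by
      simp only [hPol]
      rw [← Finset.sum_sub_distrib, ← Finset.sum_add_distrib, ← Finset.sum_add_distrib]
      refine Finset.sum_le_sum fun s' _ => ?_
      rw [← mul_sub, ← mul_add, ← mul_add]
      refine mul_le_mul_of_nonneg_left ?_ (hPnn s a s')
      have h1 := (ih s' (πstar s')).2
      have h2 : Qstar s' (πk k s') ≤ Qstar s' (πstar s') := by
        rw [hπstar]; exact Finset.le_sup' (fun a => Qstar s' a) (Finset.mem_univ _)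
      linarith
    have hb := hFbar k s a
    rw [hT] at hb
    simp only [← hπstar] at hq
    simp only [← hπk] at hb
    have hc : 0 ≤ α k * γ * p s a := mul_nonneg (mul_nonneg (hα0 k) hγ0) (hp0 s a)
    have hd : 0 ≤ 1 - α k * p s a :=
      sub_nonneg.2 (mul_le_one₀ (hα1 k) (hp0 s a) (hp1 s a))
    have l1 := mul_le_mul_of_nonneg_left hl hc
    have u1 := mul_le_mul_of_nonneg_left hu hc
    have l2 := mul_le_mul_of_nonneg_left (ih s a).1 hd
    have u2 := mul_le_mul_of_nonneg_left (ih s a).2 hd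
    have hq' := congrArg (α k * p s a * ·) hq
    beta_reduce at hq'
    rw [hQrec, hdown, hup, hb]
    constructor <;> linarith
end

section
/- Contraction and nonnegativity of the one-step matrix. Let n ≥ 1, let D be an n×n real diagonal matrix whose diagonal entries p_i satisfy ρ ≤ p_i ≤ 1 for some ρ > 0, let P be an n×n row-stochastic matrix, let γ ∈ [0,1), and let α ∈ [0,1]. Then (i) every entry of the matrix I − αD + αγDP is nonnegative, and (ii) ‖I − αD(I − γP)‖∞ ≤ 1 − αρ(1−γ), where ‖M‖∞ denotes the ℓ∞→ℓ∞ operator norm (maximum absolute row sum). -/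
open Finset

/-- ℓ∞→ℓ∞ operator norm of a matrix: maximum absolute row sum. -/
noncomputable def normInf {n : Type*} [Fintype n] [Nonempty n] (M : Matrix n n ℝ) : ℝ :=
  Finset.univ.sup' Finset.univ_nonempty (fun i => ∑ j, |M i j|)

/-- Contraction and nonnegativity of the one-step matrix. -/
theorem contraction_and_nonnegativity_one_step_matrix
    {n : Type*} [Fintype n] [Nonempty n] [DecidableEq n]
    (p : n → ℝ) (ρ : ℝ) (hρ : 0 < ρ)
    (hp : ∀ i, ρ ≤ p i ∧ p i ≤ 1)
    (P : Matrix n n ℝ) (hPnn : ∀ i j, 0 ≤ P i j) (hPsum : ∀ i, ∑ j, P i j = 1)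
    (γ : ℝ) (hγ0 : 0 ≤ γ) (hγ1 : γ < 1)
    (α : ℝ) (hα0 : 0 ≤ α) (hα1 : α ≤ 1) :
    (∀ i j, 0 ≤ ((1 : Matrix n n ℝ) - α • Matrix.diagonal p
        + (α * γ) • (Matrix.diagonal p * P)) i j) ∧
      normInf ((1 : Matrix n n ℝ)
          - α • (Matrix.diagonal p * ((1 : Matrix n n ℝ) - γ • P))) ≤
        1 - α * ρ * (1 - γ) := by
  have hE : ∀ i j, ((1 : Matrix n n ℝ) - α • Matrix.diagonal p
        + (α * γ) • (Matrix.diagonal p * P)) i j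
        = (1 - α * p i) * (1 : Matrix n n ℝ) i j + α * γ * p i * P i j := by
    intro i j
    simp only [Matrix.add_apply, Matrix.sub_apply, Matrix.smul_apply, Matrix.diagonal_mul,
      smul_eq_mul, Matrix.one_apply, Matrix.diagonal_apply]
    split_ifs <;> ring
  have hM : (1 : Matrix n n ℝ) - α • (Matrix.diagonal p * ((1 : Matrix n n ℝ) - γ • P))
      = (1 : Matrix n n ℝ) - α • Matrix.diagonal p
        + (α * γ) • (Matrix.diagonal p * P) := by
    rw [mul_sub, mul_one, smul_sub, Matrix.mul_smul, smul_smul]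
    abel
  have hnn : ∀ i j, 0 ≤ ((1 : Matrix n n ℝ) - α • Matrix.diagonal p
        + (α * γ) • (Matrix.diagonal p * P)) i j := by
    intro i j
    rw [hE]
    have h0 : 0 ≤ p i := hρ.le.trans (hp i).1
    have h1 : 0 ≤ 1 - α * p i := by nlinarith [(hp i).2]
    have h2 : 0 ≤ (1 : Matrix n n ℝ) i j := by
      rw [Matrix.one_apply]; split_ifs <;> norm_num
    have h3 := hPnn i j
    positivity
  refine ⟨hnn, ?_⟩
  rw [hM]
  unfold normInf
  refine Finset.sup'_le _ _ fun i _ => ?_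
  rw [Finset.sum_congr rfl fun j _ => (abs_of_nonneg (hnn i j)).trans (hE i j),
    Finset.sum_add_distrib, ← Finset.mul_sum, ← Finset.mul_sum, hPsum]
  have : ∑ j, (1 : Matrix n n ℝ) i j = 1 := by simp [Matrix.one_apply]
  rw [this]
  have h := mul_nonneg (mul_nonneg hα0 (sub_nonneg.2 (hp i).1)) (sub_nonneg.2 hγ1.le)
  nlinarith [h]
end

section
/- Sum of products bound for polynomial step sizes (first bound of Lemma 4). Let β ∈ (0,1) and b > 0. There exists a constant C > 0 depending only on β and b such that for every c ∈ (0, min(1, b^β)] and every integer K ≥ 1: ∑_{k=1}^K ∏_{i=0}^{k-1} (1 − c(i+b)^{−β}) ≤ C · c^{−1/(1−β)}. -/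
open Finset

/-- Sum of products bound for polynomial step sizes (first bound of Lemma 4). -/
theorem sum_of_products_bound_polynomial_step_sizes
    (β b : ℝ) (hβ0 : 0 < β) (hβ1 : β < 1) (hb : 0 < b) :
    ∃ C : ℝ, 0 < C ∧
      ∀ c : ℝ, 0 < c → c ≤ min 1 (b ^ β) →
        ∀ K : ℕ, 1 ≤ K →
          ∑ k ∈ Finset.Icc 1 K, ∏ i ∈ Finset.range k, (1 - c * ((i : ℝ) + b) ^ (-β)) ≤
            C * c ^ (-1 / (1 - β)) := by
  have h1β : 0 < 1 - β := by linarith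
  refine ⟨(b + 1) ^ β / (1 - β), by positivity, ?_⟩
  intro c hc hcm K _
  have hc1 : c ≤ 1 := hcm.trans (min_le_left _ _)
  have hcb : c ≤ b ^ β := hcm.trans (min_le_right _ _)
  set x0 : ℝ := c ^ (-1 / (1 - β)) with hx0
  have hx0pos : 0 < x0 := Real.rpow_pos_of_pos hc _
  have hx01 : 1 ≤ x0 := by
    apply Real.one_le_rpow_of_pos_of_le_one_of_nonpos hc hc1
    apply div_nonpos_of_nonpos_of_nonneg <;> linarith
  have hx0c : x0 ^ (β - 1) = c := by
    rw [hx0, ← Real.rpow_mul hc.le]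
    have : -1 / (1 - β) * (β - 1) = 1 := by
      field_simp
      ring
    rw [this, Real.rpow_one]
  have hx0β : x0 ^ β = c * x0 := by
    have : x0 ^ β = x0 ^ ((β - 1) + 1) := by congr 1; ring
    rw [this, Real.rpow_add hx0pos, hx0c, Real.rpow_one]
  set z : ℕ → ℝ := fun i => max ((i : ℝ) + b) x0 with hz
  set P : ℕ → ℝ := fun k => ∏ i ∈ Finset.range k, (1 - c * ((i : ℝ) + b) ^ (-β)) with hP
  have hzx : ∀ i, x0 ≤ z i := fun i => le_max_right _ _
  have hzpos : ∀ i, 0 < z i := fun i => lt_of_lt_of_le hx0pos (hzx i)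
  have hf : ∀ i : ℕ, 0 ≤ 1 - c * ((i : ℝ) + b) ^ (-β) := by
    intro i
    have hi : (0 : ℝ) < i + b := by positivity
    have h1 : b ^ β ≤ ((i : ℝ) + b) ^ β := 
      Real.rpow_le_rpow hb.le (by linarith [Nat.cast_nonneg (α := ℝ) i]) hβ0.le
    rw [Real.rpow_neg hi.le, ← div_eq_mul_inv, sub_nonneg, div_le_one (by positivity)]
    linarith
  have hPn : ∀ k, 0 ≤ P k := fun k => Finset.prod_nonneg (fun i _ => hf i)
  have hstep : ∀ i : ℕ, (1 - c * ((i : ℝ) + b) ^ (-β)) * z (i + 1) ^ β ≤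
      z i ^ β - c * (1 - β) := by
    intro i
    have hi : (0 : ℝ) < i + b := by positivity
    have hz1 : z (i + 1) ≤ z i + 1 := by
      apply max_le
      · push_cast
        linarith [le_max_left ((i : ℝ) + b) x0]
      · linarith [hzx i]
    have hz2 : (i : ℝ) + b ≤ z (i + 1) := by
      refine le_trans ?_ (le_max_left _ _)
      push_cast
      linarith
    have hA : z (i + 1) ^ β ≤ z i ^ β + β * c := by
      have h1 : z (i + 1) ^ β ≤ (z i + 1) ^ β :=
        Real.rpow_le_rpow (hzpos _).le hz1 hβ0.le
      have hzi := hzpos i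
      have h2 : (z i + 1) = z i * (1 + 1 / z i) := by field_simp
      have h3 : (1 + 1 / z i) ^ β ≤ 1 + β * (1 / z i) :=
        rpow_one_add_le_one_add_mul_self
          (by have : 0 < 1 / z i := by positivity
              linarith) hβ0.le hβ1.le
      have h4 : z i ^ (β - 1) ≤ c := by
        rw [← hx0c]
        exact Real.rpow_le_rpow_of_nonpos hx0pos (hzx i) (by linarith)
      have h5 : z i ^ (β - 1) = z i ^ β / z i := Real.rpow_sub_one hzi.ne' β
      rw [h2, Real.mul_rpow hzi.le (by positivity)] at h1
      have h6 := mul_le_mul_of_nonneg_left h3 (Real.rpow_nonneg hzi.le β)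
      have h7 : z i ^ β * (1 + β * (1 / z i)) = z i ^ β + β * z i ^ (β - 1) := by
        rw [h5]; ring
      have h8 := mul_le_mul_of_nonneg_left h4 hβ0.le
      linarith
    have hB : c ≤ c * ((i : ℝ) + b) ^ (-β) * z (i + 1) ^ β := by
      have h1 : ((i : ℝ) + b) ^ β ≤ z (i + 1) ^ β := Real.rpow_le_rpow hi.le hz2 hβ0.le
      have h2 : 1 ≤ ((i : ℝ) + b) ^ (-β) * z (i + 1) ^ β := by
        rw [Real.rpow_neg hi.le, inv_mul_eq_div, one_le_div (by positivity)]
        exact h1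
      rw [mul_assoc]
      exact le_mul_of_one_le_right hc.le h2
    linarith
  have hind : ∀ n : ℕ, c * (1 - β) * ∑ k ∈ Finset.range n, P k + P n * z n ^ β ≤ z 0 ^ β := by
    intro n
    induction n with
    | zero => simp [hP]
    | succ n ih =>
      have hPs : P (n + 1) = P n * (1 - c * ((n : ℝ) + b) ^ (-β)) := Finset.prod_range_succ _ _
      rw [Finset.sum_range_succ, hPs]
      have := mul_le_mul_of_nonneg_left (hstep n) (hPn n)
      linarith
  have hsub : ∑ k ∈ Finset.Icc 1 K, P k ≤ ∑ k ∈ Finset.range (K + 1), P k := by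
    apply Finset.sum_le_sum_of_subset_of_nonneg
    · intro k hk
      simp only [Finset.mem_Icc, Finset.mem_range] at *
      omega
    · intro i _ _
      exact hPn i
  have hz0 : z 0 ^ β ≤ (b + 1) ^ β * (c * x0) := by
    rw [← hx0β, ← Real.mul_rpow (by positivity) hx0pos.le]
    apply Real.rpow_le_rpow (hzpos 0).le _ hβ0.le
    apply max_le
    · push_cast
      nlinarith
    · nlinarith
  have h1 := hind (K + 1)
  have h2 : 0 ≤ P (K + 1) * z (K + 1) ^ β :=
    mul_nonneg (hPn _) (Real.rpow_nonneg (hzpos _).le _)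
  refine hsub.trans ?_
  rw [div_mul_eq_mul_div, le_div_iff₀ h1β]
  refine le_of_mul_le_mul_left ?_ hc
  linarith
end

section
/- Double-sum exponential bound for polynomial step sizes (unnamed lemma following Lemma 4). Let α, b > 0, β ∈ (0,1), and set α_k := α(k+b)^{−β}. There exists a constant C > 0 depending only on α, b, and β such that for every c ∈ (0,1] and all integers 1 ≤ i < K: ∑_{t=i+1}^{K} ∑_{k=i}^{t-1} c·α_k · exp(−c ∑_{j=i+1}^{t-2} α_j) ≤ C·( c^{−1/(1−β)} + (i−1)^β / c ), where sums over empty index ranges equal 0. -/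
open Finset

lemma aux_tele (N : ℝ) (hN : 0 < N) (m : ℕ) :
    ∑ n ∈ Finset.range m, ((1 + (n : ℝ) / N) ^ 2)⁻¹ ≤ 1 + N := by
  have key : ∀ m : ℕ, ∑ n ∈ Finset.range (m + 1), ((1 + (n : ℝ) / N) ^ 2)⁻¹
      ≤ 1 + N - N ^ 2 / (N + m) := by
    intro m
    induction m with
    | zero => 
      have : N ^ 2 / N = N := by field_simp
      simp [this]
    | succ k ih =>
      rw [Finset.sum_range_succ]
      have h1 : ((1 + ((k + 1 : ℕ) : ℝ) / N) ^ 2)⁻¹ = N ^ 2 / (N + k + 1) ^ 2 := by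
        push_cast
        have : (1 + ((k : ℝ) + 1) / N) = (N + k + 1) / N := by field_simp; ring
        rw [this, div_pow, inv_div]
      have hk : (0 : ℝ) ≤ k := Nat.cast_nonneg k
      have h2 : N ^ 2 / (N + k + 1) ^ 2 ≤ N ^ 2 / (N + k) - N ^ 2 / (N + k + 1) := by
        have h3 : N ^ 2 / (N + k) - N ^ 2 / (N + k + 1) = N ^ 2 / ((N + k) * (N + k + 1)) := by
          have : N + k ≠ 0 := by positivity
          have : N + k + 1 ≠ 0 := by positivity
          field_simp
          ring
        rw [h3]
        apply div_le_div_of_nonneg_left (by positivity) (by positivity)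
        nlinarith
      rw [h1]
      push_cast
      rw [← add_assoc]
      linarith
  refine le_trans ?_ ((key m).trans ?_)
  · apply Finset.sum_le_sum_of_subset_of_nonneg
    · intro x; simp; omega
    · intros; positivity
  · have : 0 ≤ N ^ 2 / (N + m) := by positivity
    linarith

lemma aux_exp (γ : ℝ) (hγ : 0 < γ) :
    ∃ M : ℝ, 0 < M ∧ ∀ z : ℝ, 0 ≤ z → Real.exp (-(z ^ γ)) ≤ M * ((1 + z) ^ 2)⁻¹ := by
  obtain ⟨k, hk⟩ := exists_nat_ge (2 / γ)
  have hf : (1 : ℝ) ≤ (k.factorial : ℝ) := by exact_mod_cast Nat.one_le_iff_ne_zero.2 (Nat.factorial_ne_zero k)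
  refine ⟨4 * k.factorial, by positivity, fun z hz => ?_⟩
  rw [← div_eq_mul_inv, le_div_iff₀ (by positivity), Real.exp_neg, inv_mul_le_iff₀ (Real.exp_pos _)]
  have hw : 0 ≤ z ^ γ := by positivity
  rcases le_total z 1 with h | h
  · have : 1 ≤ Real.exp (z ^ γ) := Real.one_le_exp hw
    have : (1 + z) ^ 2 ≤ 4 := by nlinarith
    nlinarith
  · have h1 := Real.pow_div_factorial_le_exp (z ^ γ) hw k
    rw [div_le_iff₀ (by positivity)] at h1
    have h2 : z ^ 2 ≤ (z ^ γ) ^ k := by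
      rw [← Real.rpow_natCast, ← Real.rpow_natCast, ← Real.rpow_mul hz]
      apply Real.rpow_le_rpow_of_exponent_le h
      rw [div_le_iff₀ hγ] at hk
      push_cast
      linarith
    nlinarith

/-- Double-sum exponential bound for polynomial step sizes
(unnamed lemma following Lemma 4). -/
theorem double_sum_exponential_bound_polynomial_step_sizes
    (α b β : ℝ) (hα : 0 < α) (hb : 0 < b) (hβ0 : 0 < β) (hβ1 : β < 1) :
    ∃ C : ℝ, 0 < C ∧
      ∀ c : ℝ, 0 < c → c ≤ 1 →
        ∀ i K : ℕ, 1 ≤ i → i < K →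
          ∑ t ∈ Finset.Icc (i + 1) K, ∑ k ∈ Finset.Icc i (t - 1),
              c * (α * ((k : ℝ) + b) ^ (-β)) *
                Real.exp (-(c * ∑ j ∈ Finset.Icc (i + 1) (t - 2),
                  α * ((j : ℝ) + b) ^ (-β))) ≤
            C * (c ^ (-1 / (1 - β)) + ((i : ℝ) - 1) ^ β / c) := by
  have hγ : 0 < 1 - β := by linarith
  obtain ⟨M, hM, hMz⟩ := aux_exp (1 - β) hγ
  set A : ℝ := α * b ^ (-β) with hA
  set κ : ℝ := α * (2 * (1 + b)) ^ (-β) / 2 with hκdef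
  have hκ : 0 < κ := by positivity
  refine ⟨2 * Real.exp (2 * A) * ((1 + 2 / κ) + M * (1 + κ ^ (-1 / (1 - β)))), by positivity, ?_⟩
  intro c hc hc1 i K hi hiK
  have hi1 : (1 : ℝ) ≤ i := by exact_mod_cast hi
  have hi0 : (0 : ℝ) < i := by linarith
  set a : ℕ → ℝ := fun k => α * ((k : ℝ) + b) ^ (-β) with ha
  have ha0 : ∀ k, 0 < a k := fun k => by simp only [ha]; positivity
  have haA : ∀ k, a k ≤ A := fun k => by
    simp only [ha, hA]
    apply mul_le_mul_of_nonneg_left _ hα.le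
    apply Real.rpow_le_rpow_of_nonpos hb (by simp) (by linarith)
  set N1 : ℝ := 2 * (i : ℝ) ^ β / (κ * c) with hN1
  set N2 : ℝ := (κ * c) ^ (-1 / (1 - β)) with hN2
  have hN1p : 0 < N1 := by positivity
  have hN2p : 0 < N2 := by positivity
  -- termwise
  have term : ∀ n : ℕ, ∑ k ∈ Finset.Icc i (i + n), c * a k *
      Real.exp (-(c * ∑ j ∈ Finset.Icc (i + 1) (i + 1 + n - 2), a j)) ≤
      2 * Real.exp (2 * A) * (((1 + (n : ℝ) / N1) ^ 2)⁻¹ + M * ((1 + (n : ℝ) / N2) ^ 2)⁻¹) := by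
    intro n
    rw [← Finset.sum_mul, ← Finset.mul_sum]
    set I : ℝ := c * ∑ k ∈ Finset.Icc i (i + n), a k with hI
    set S : ℝ := c * ∑ j ∈ Finset.Icc (i + 1) (i + 1 + n - 2), a j with hS
    have hn0 : (0 : ℝ) ≤ n := Nat.cast_nonneg n
    have hIS : I ≤ S + 2 * A := by
      have h1 : ∑ k ∈ Finset.Icc i (i + n), a k ≤
          (∑ j ∈ Finset.Icc (i + 1) (i + 1 + n - 2), a j) + (a i + a (i + n)) := by
        have hsub : Finset.Icc i (i + n) ⊆
            insert i (insert (i + n) (Finset.Icc (i + 1) (i + 1 + n - 2))) := by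
          intro x; simp; omega
        refine (Finset.sum_le_sum_of_subset_of_nonneg hsub (fun k _ _ => (ha0 k).le)).trans ?_
        have g : ∀ (x : ℕ) (s : Finset ℕ), ∑ k ∈ insert x s, a k ≤ a x + ∑ k ∈ s, a k := by
          intro x s
          by_cases hx : x ∈ s
          · rw [Finset.insert_eq_of_mem hx]; linarith [ha0 x]
          · rw [Finset.sum_insert hx]
        have g1 := g i (insert (i + n) (Finset.Icc (i + 1) (i + 1 + n - 2)))
        have g2 := g (i + n) (Finset.Icc (i + 1) (i + 1 + n - 2))
        linarith
      have h2 := mul_le_mul_of_nonneg_left h1 hc.le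
      have h3 := haA i
      have h4 := haA (i + n)
      have h5 : c * (a i + a (i + n)) ≤ 1 * (a i + a (i + n)) :=
        mul_le_mul_of_nonneg_right hc1 (by linarith [ha0 i, ha0 (i + n)])
      rw [mul_add] at h2
      linarith
    have hIlow : c * (n * (α * ((i : ℝ) + n + b) ^ (-β))) ≤ I := by
      apply mul_le_mul_of_nonneg_left _ hc.le
      have h1 : ∀ k ∈ Finset.Icc i (i + n), α * ((i : ℝ) + n + b) ^ (-β) ≤ a k := by
        intro k hk
        simp only [ha]
        apply mul_le_mul_of_nonneg_left _ hα.le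
        have hk2 : (k : ℝ) ≤ i + n := by exact_mod_cast (Finset.mem_Icc.1 hk).2
        apply Real.rpow_le_rpow_of_nonpos (by positivity) (by linarith) (by linarith)
      have h2 := Finset.card_nsmul_le_sum _ _ _ h1
      rw [nsmul_eq_mul, Nat.card_Icc] at h2
      refine le_trans (mul_le_mul_of_nonneg_right ?_ (by positivity)) h2
      exact_mod_cast (by omega : n ≤ i + n + 1 - i)
    have hI2 : I * Real.exp (-S) ≤ 2 * Real.exp (2 * A) * Real.exp (-(I / 2)) := by
      have h1 : Real.exp (-S) ≤ Real.exp (2 * A) * Real.exp (-I) := by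
        rw [← Real.exp_add]; apply Real.exp_le_exp.2; linarith
      have hI0 : 0 ≤ I := le_trans (by positivity) hIlow
      have h2 : I ≤ 2 * Real.exp (I / 2) := by linarith [Real.add_one_le_exp (I / 2)]
      calc I * Real.exp (-S) ≤ (2 * Real.exp (I / 2)) * (Real.exp (2 * A) * Real.exp (-I)) := by
            gcongr
        _ = 2 * Real.exp (2 * A) * (Real.exp (I / 2) * Real.exp (-I)) := by ring
        _ = _ := by rw [← Real.exp_add]; congr 2; ring
    refine hI2.trans (mul_le_mul_of_nonneg_left ?_ (by positivity))
    have hmax : ∀ m : ℝ, 1 ≤ m → (i : ℝ) ≤ m → (n : ℝ) ≤ m → κ * c * (n * m ^ (-β)) ≤ I / 2 := by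
      intro m hm him hnm
      have h1 : (2 * (1 + b)) ^ (-β) * m ^ (-β) ≤ ((i : ℝ) + n + b) ^ (-β) := by
        rw [← Real.mul_rpow (by positivity) (by positivity)]
        apply Real.rpow_le_rpow_of_nonpos (by positivity) (by nlinarith) (by linarith)
      have h2 := mul_le_mul_of_nonneg_left h1 (by positivity : 0 ≤ c * n * α)
      rw [hκdef]
      linarith
    rcases le_total (n : ℝ) (i : ℝ) with h | h
    · have h1 := hmax i hi1 le_rfl h
      have h2 : κ * c * (n * (i : ℝ) ^ (-β)) = 2 * (n / N1) := by
        rw [hN1, Real.rpow_neg hi0.le]; field_simp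
      have h3 : 0 ≤ M * ((1 + (n : ℝ) / N2) ^ 2)⁻¹ := by positivity
      have h4 : Real.exp (-(I / 2)) ≤ ((1 + (n : ℝ) / N1) ^ 2)⁻¹ := by
        rw [Real.exp_neg]
        apply inv_anti₀ (by positivity)
        calc (1 + (n : ℝ) / N1) ^ 2 ≤ (Real.exp (n / N1)) ^ 2 := by
              gcongr; linarith [Real.add_one_le_exp (n / N1)]
          _ = Real.exp (2 * (n / N1)) := by rw [← Real.exp_nat_mul]; norm_num
          _ ≤ _ := Real.exp_le_exp.2 (by linarith)
      linarith
    · have hnp : (0 : ℝ) < n := by linarith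
      have h1 := hmax n (hi1.trans h) h le_rfl
      have h2 : κ * c * (n * (n : ℝ) ^ (-β)) = (n / N2) ^ (1 - β) := by
        rw [Real.div_rpow hnp.le hN2p.le, hN2, ← Real.rpow_mul (by positivity),
          div_mul_cancel₀ _ hγ.ne', Real.rpow_neg_one, sub_eq_add_neg, Real.rpow_add hnp,
          Real.rpow_one]
        field_simp
      have h3 : 0 ≤ ((1 + (n : ℝ) / N1) ^ 2)⁻¹ := by positivity
      have h4 := hMz (n / N2) (by positivity)
      have h5 : Real.exp (-(I / 2)) ≤ Real.exp (-((n / N2) ^ (1 - β))) :=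
        Real.exp_le_exp.2 (by linarith)
      linarith
  have hre : ∑ t ∈ Finset.Icc (i + 1) K, ∑ k ∈ Finset.Icc i (t - 1), c * a k *
      Real.exp (-(c * ∑ j ∈ Finset.Icc (i + 1) (t - 2), a j)) =
      ∑ n ∈ Finset.range (K - i), ∑ k ∈ Finset.Icc i (i + n), c * a k *
      Real.exp (-(c * ∑ j ∈ Finset.Icc (i + 1) (i + 1 + n - 2), a j)) := by
    have : Finset.Icc (i + 1) K = Finset.Ico (i + 1) (K + 1) := by ext; simp
    rw [this, Finset.sum_Ico_eq_sum_range]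
    have h2 : K + 1 - (i + 1) = K - i := by omega
    rw [h2]
    apply Finset.sum_congr rfl
    intro n _
    have h3 : i + 1 + n - 1 = i + n := by omega
    rw [h3]
  rw [hre]
  refine (Finset.sum_le_sum (fun n _ => term n)).trans ?_
  rw [← Finset.mul_sum, Finset.sum_add_distrib, ← Finset.mul_sum, mul_assoc (2 * Real.exp (2 * A)) (_ + _)]
  apply mul_le_mul_of_nonneg_left _ (by positivity)
  have t1 := aux_tele N1 hN1p (K - i)
  have t2 := mul_le_mul_of_nonneg_left (aux_tele N2 hN2p (K - i)) hM.le
  set X : ℝ := c ^ (-1 / (1 - β)) with hX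
  set Y : ℝ := ((i : ℝ) - 1) ^ β / c with hY
  have hY0 : 0 ≤ Y := div_nonneg (Real.rpow_nonneg (by linarith) _) hc.le
  have hXc : 1 / c ≤ X := by
    rw [one_div, ← Real.rpow_neg_one, hX]
    apply Real.rpow_le_rpow_of_exponent_ge hc hc1
    rw [div_le_iff₀ hγ]; linarith
  have hX1 : 1 ≤ X := le_trans (by rw [le_div_iff₀ hc]; linarith) hXc
  have hN2e : N2 = κ ^ (-1 / (1 - β)) * X := by
    rw [hN2, Real.mul_rpow hκ.le hc.le]
  have hib : (i : ℝ) ^ β ≤ ((i : ℝ) - 1) ^ β + 1 := by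
    have := Real.rpow_add_le_add_rpow (p := β) (by linarith : 0 ≤ (i : ℝ) - 1) zero_le_one hβ0.le hβ1.le
    simpa using this
  have hN1e : N1 ≤ 2 / κ * (X + Y) := by
    have h1 : N1 = 2 / κ * ((i : ℝ) ^ β / c) := by rw [hN1]; field_simp
    rw [h1]
    apply mul_le_mul_of_nonneg_left _ (by positivity)
    have h2 : (i : ℝ) ^ β / c ≤ (((i : ℝ) - 1) ^ β + 1) / c := by gcongr
    rw [add_div] at h2
    linarith
  have hp : 0 ≤ M * (1 + κ ^ (-1 / (1 - β))) * Y := by positivity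
  have hq : M * (1 + N2) ≤ M * (1 + κ ^ (-1 / (1 - β))) * X := by
    rw [hN2e, mul_assoc]
    apply mul_le_mul_of_nonneg_left _ hM.le
    linarith
  linarith
end

section
/- Pointwise bound on the deviation of Ψ_i^K from A^{-1} (equation (13) in the proof of Lemma 4). Let α, b > 0, β ∈ (0,1), and α_j := α(j+b)^{−β}. Let c ∈ (0,1] and let A be an invertible n×n real matrix such that ‖I − α_j A‖∞ ≤ 1 − cα_j for all j ≥ 0 and ‖A^{-1}‖∞ ≤ 1/c. Then there exists a constant C > 0 depending only on α, b, and β such that for all integers 1 ≤ i ≤ K: ‖Ψ_i^K − A^{-1}‖∞ ≤ C·( 1/(i·c^{(2−β)/(1−β)}) + (i−1)^β/(i·c²) + (1 − cα_K)^{K−i+1}/c ). -/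
open Finset

/-- The matrix product ∏_{j=a}^{b-1} (I - α_j A), taken over the index range [a, b)
(empty products equal the identity; all factors commute, so the order is immaterial). -/
noncomputable def prodIco {n : Type*} [Fintype n] [DecidableEq n]
    (A : Matrix n n ℝ) (α : ℕ → ℝ) (a b : ℕ) : Matrix n n ℝ :=
  ((List.range' a (b - a)).map (fun j => (1 : Matrix n n ℝ) - α j • A)).prod

/-- Ψ_i^K := α_i ∑_{k=i+1}^{K} ∏_{j=i+1}^{k-1} (I - α_j A). -/
noncomputable def Psi {n : Type*} [Fintype n] [DecidableEq n]
    (A : Matrix n n ℝ) (α : ℕ → ℝ) (i K : ℕ) : Matrix n n ℝ :=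
  α i • ∑ k ∈ Finset.Icc (i + 1) K, prodIco A α (i + 1) k


attribute [local instance] Matrix.linftyOpNormedRing Matrix.linftyOpNormedAddCommGroup Matrix.linftyOpNormedSpace

lemma normInf_eq {n : Type*} [Fintype n] [Nonempty n] [DecidableEq n] (M : Matrix n n ℝ) :
    normInf M = ‖M‖ := by
  rw [Matrix.linfty_opNorm_def]
  unfold normInf
  apply le_antisymm
  · apply Finset.sup'_le
    intro i _
    have h : (∑ j, ‖M i j‖₊) ≤ (Finset.univ.sup fun i => ∑ j, ‖M i j‖₊) :=
      Finset.le_sup (f := fun i => ∑ j, ‖M i j‖₊) (Finset.mem_univ i)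
    have h2 := NNReal.coe_le_coe.2 h
    simpa using h2
  · obtain ⟨i, _, hi⟩ := Finset.exists_mem_eq_sup (Finset.univ : Finset n) Finset.univ_nonempty
      (fun i => ∑ j, ‖M i j‖₊)
    rw [hi]
    have := Finset.le_sup' (fun i => ∑ j, |M i j|) (Finset.mem_univ i)
    refine le_trans (le_of_eq ?_) this
    simp

lemma norm_one_mat {n : Type*} [Fintype n] [Nonempty n] [DecidableEq n] :
    ‖(1 : Matrix n n ℝ)‖ = 1 := by
  rw [← normInf_eq]
  unfold normInf
  have : (fun i : n => ∑ j, |(1 : Matrix n n ℝ) i j|) = fun _ => 1 := by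
    funext i
    simp [Matrix.one_apply, apply_ite abs]
  rw [this]
  simp

noncomputable def SS {n : Type*} [Fintype n] [DecidableEq n]
    (A : Matrix n n ℝ) (a : ℕ → ℝ) (i K : ℕ) : Matrix n n ℝ :=
  ∑ k ∈ Finset.Icc (i + 1) K, prodIco A a (i + 1) k

lemma SS_self {n : Type*} [Fintype n] [DecidableEq n]
    (A : Matrix n n ℝ) (a : ℕ → ℝ) (K : ℕ) : SS A a K K = 0 := by
  simp [SS]

lemma SS_succ {n : Type*} [Fintype n] [DecidableEq n]
    (A : Matrix n n ℝ) (a : ℕ → ℝ) (i K : ℕ) (h : i < K) :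
    SS A a i K = 1 + (1 - a (i + 1) • A) * SS A a (i + 1) K := by
  unfold SS
  rw [← Finset.add_sum_Ioc_eq_sum_Icc (show i + 1 ≤ K from h), Finset.mul_sum]
  congr 1
  · simp [prodIco]
  · apply Finset.sum_congr
    · ext x; simp
    · intro k hk
      simp only [Finset.mem_Icc] at hk
      unfold prodIco
      obtain ⟨m, rfl⟩ : ∃ m, k = i + 1 + 1 + m := ⟨k - (i+1+1), by omega⟩
      rw [show i + 1 + 1 + m - (i + 1) = m + 1 by omega,
        show i + 1 + 1 + m - (i + 1 + 1) = m by omega, List.range'_succ]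
      simp

lemma sub_rpow_le (β y : ℝ) (h0 : 0 < β) (h1 : β < 1) (hy : 1 ≤ y) :
    y ^ β - (y - 1) ^ β ≤ y ^ β / y := by
  have hy0 : 0 < y := by linarith
  have e : y - 1 = y * ((y - 1) / y) := by field_simp
  have hq0 : 0 ≤ (y - 1) / y := div_nonneg (by linarith) hy0.le
  have hq1 : (y - 1) / y ≤ 1 := by rw [div_le_one hy0]; linarith
  have h2 : (y - 1) / y ≤ ((y - 1) / y) ^ β := by
    rcases hq0.eq_or_lt with h | h
    · rw [← h]; exact Real.rpow_nonneg le_rfl _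
    · simpa using Real.rpow_le_rpow_of_exponent_ge h hq1 h1.le
  have h3 : (y - 1) ^ β = y ^ β * ((y - 1) / y) ^ β := by
    conv_lhs => rw [e]
    exact Real.mul_rpow hy0.le hq0
  rw [h3]
  have h4 := mul_le_mul_of_nonneg_left h2 (Real.rpow_nonneg hy0.le β)
  have h5 : y ^ β * ((y - 1) / y) = y ^ β - y ^ β / y := by field_simp
  linarith

lemma step_diff (β y : ℝ) (h0 : 0 < β) (h1 : β < 1) (hy : 2 ≤ y) :
    (y - 1) ^ (-β) - y ^ (-β) ≤ 2 * y ^ (-β) / y := by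
  have hy0 : 0 < y := by linarith
  have hy1 : 0 < y - 1 := by linarith
  have h := sub_rpow_le β y h0 h1 (by linarith)
  rw [Real.rpow_neg hy1.le, Real.rpow_neg hy0.le]
  have p1 : 0 < y ^ β := Real.rpow_pos_of_pos hy0 _
  have p2 : 0 < (y - 1) ^ β := Real.rpow_pos_of_pos hy1 _
  have h2 : y ^ β ≤ 2 * (y - 1) ^ β := by
    calc y ^ β ≤ (2 * (y - 1)) ^ β := Real.rpow_le_rpow hy0.le (by linarith) h0.le
      _ = 2 ^ β * (y - 1) ^ β := Real.mul_rpow (by norm_num) hy1.le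
      _ ≤ 2 * (y - 1) ^ β := by
        apply mul_le_mul_of_nonneg_right _ p2.le
        simpa using Real.rpow_le_rpow_of_exponent_le (by norm_num : (1:ℝ) ≤ 2) h1.le
  generalize y ^ β = P at *
  generalize (y - 1) ^ β = Q at *
  have e : Q⁻¹ - P⁻¹ = (P - Q) / (P * Q) := by field_simp
  have e2 : 2 * P⁻¹ / y = (P / y) * (2 * Q) / (P * (P * Q)) := by field_simp
  rw [e, e2, div_le_div_iff₀ (by positivity) (by positivity)]
  have : (P - Q) * P ≤ (P / y) * (2 * Q) :=
    mul_le_mul h h2 p1.le (by positivity)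
  nlinarith [mul_le_mul_of_nonneg_right this (by positivity : 0 ≤ P * Q)]

noncomputable def VV (α β c X y : ℝ) : ℝ :=
  2 / (α * c) * (max y X) ^ β + max (X - y) 0

lemma VV_step (α β c X y : ℝ) (hα : 0 < α) (h0 : 0 < β) (h1 : β < 1) (hc : 0 < c)
    (hX : 0 < X) (hXe : X ^ β / X = α * c / 2) (hy : 1 ≤ y) :
    1 + (1 - c * (α * y ^ (-β))) * VV α β c X y ≤ VV α β c X (y - 1) := by
  have hy0 : 0 < y := by linarith
  unfold VV
  rcases le_total y X with h | h
  · rw [max_eq_right h, max_eq_right (by linarith : y - 1 ≤ X), max_eq_left (by linarith),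
      max_eq_left (by linarith)]
    have : 0 ≤ c * (α * y ^ (-β)) * (2 / (α * c) * X ^ β + (X - y)) := by
      have : 0 ≤ X - y := by linarith
      positivity
    linarith
  · rw [max_eq_left h, max_eq_right (by linarith : X - y ≤ 0)]
    have hm : (y - 1) ^ β ≤ (max (y - 1) X) ^ β :=
      Real.rpow_le_rpow (by linarith) (le_max_left _ _) h0.le
    have hs := sub_rpow_le β y h0 h1 hy
    have hd : y ^ β / y ≤ α * c / 2 := by
      rw [← hXe, ← Real.rpow_sub_one hy0.ne', ← Real.rpow_sub_one hX.ne']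
      exact Real.rpow_le_rpow_of_nonpos hX h (by linarith)
    have hmm := le_max_right (X - (y - 1)) 0
    have p1 : 0 < y ^ β := Real.rpow_pos_of_pos hy0 _
    have e : c * (α * y ^ (-β)) * (2 / (α * c) * y ^ β) = 2 := by
      rw [Real.rpow_neg hy0.le]; field_simp
    have k : 2 / (α * c) * (y ^ β - (max (y - 1) X) ^ β) ≤ 1 := by
      calc _ ≤ 2 / (α * c) * (α * c / 2) := by
            apply mul_le_mul_of_nonneg_left (by linarith) (by positivity)
        _ = 1 := by field_simp
    linarith

lemma VV_nonneg (α β c X y : ℝ) (hα : 0 < α) (hc : 0 < c)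
    (hX : 0 < X) : 0 ≤ VV α β c X y := by
  unfold VV
  have : 0 ≤ max y X := le_trans hX.le (le_max_right _ _)
  have := Real.rpow_nonneg this β
  have := le_max_right (X - y) 0
  positivity

lemma VV_le (α β c X y z : ℝ) (hα : 0 < α) (h0 : 0 < β) (hc : 0 < c)
    (hX : 0 < X) (hXe : X ^ β / X = α * c / 2) (hy : 0 < y) (hz : y ≤ z) :
    VV α β c X y ≤ 2 / (α * c) * z ^ β + 2 * X := by
  unfold VV
  have h2 : max (X - y) 0 ≤ X := max_le (by linarith) hX.le
  have hzz : y ^ β ≤ z ^ β := Real.rpow_le_rpow hy.le hz h0.le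
  have h3 : (max y X) ^ β ≤ z ^ β + X ^ β := by
    have a1 := Real.rpow_nonneg hy.le β
    have a2 := Real.rpow_nonneg hX.le β
    rcases max_cases y X with h | h <;> rw [h.1] <;> linarith
  have h4 : 2 / (α * c) * X ^ β = X := by
    rw [div_eq_iff hX.ne'] at hXe
    rw [hXe]; field_simp
  have := mul_le_mul_of_nonneg_left h3 (by positivity : 0 ≤ 2 / (α * c))
  linarith

noncomputable def UU (E β c κ y : ℝ) : ℝ := E * (y ^ β / y / c ^ 2 + κ / c / y)

lemma UU_step (α β c κ X E y : ℝ) (hα : 0 < α) (h0 : 0 < β) (h1 : β < 1) (hc : 0 < c)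
    (hX : 0 < X) (hκ : 0 < κ) (hXe : X ^ β / X = α * c / 2) (hy : 2 ≤ y)
    (hE1 : 2 * (2 / α) ≤ E) (hE2 : 2 * (2 * X) ≤ E * κ) :
    α * ((y - 1) ^ (-β) - y ^ (-β)) * VV α β c X (y - 1)
      + (1 - c * (α * y ^ (-β))) * UU E β c κ y ≤ UU E β c κ (y - 1) := by
  have hy0 : 0 < y := by linarith
  have hy1 : 0 < y - 1 := by linarith
  have hE : 0 < E := lt_of_lt_of_le (by positivity) hE1
  have hd := step_diff β y h0 h1 hy
  have hV := VV_le α β c X (y - 1) y hα h0 hc hX hXe hy1 (by linarith)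
  have hV0 := VV_nonneg α β c X (y - 1) hα hc hX
  have p1 : 0 < y ^ β := Real.rpow_pos_of_pos hy0 _
  have hmono : UU E β c κ y ≤ UU E β c κ (y - 1) := by
    unfold UU
    have : y ^ β / y ≤ (y - 1) ^ β / (y - 1) := by
      rw [← Real.rpow_sub_one hy0.ne', ← Real.rpow_sub_one hy1.ne']
      exact Real.rpow_le_rpow_of_nonpos hy1 (by linarith) (by linarith)
    have h3 : κ / c / y ≤ κ / c / (y - 1) := by
      apply div_le_div_of_nonneg_left (by positivity) hy1 (by linarith)
    gcongr
  have key : α * ((y - 1) ^ (-β) - y ^ (-β)) * VV α β c X (y - 1)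
      ≤ c * (α * y ^ (-β)) * UU E β c κ y := by
    calc _ ≤ α * (2 * y ^ (-β) / y) * (2 / (α * c) * y ^ β + 2 * X) := by
          apply mul_le_mul (mul_le_mul_of_nonneg_left hd hα.le) hV hV0
          have := Real.rpow_nonneg hy0.le (-β)
          positivity
      _ = α * y ^ (-β) / y * (2 * (2 / α) * (y ^ β / c) + 2 * (2 * X)) := by
          field_simp
      _ ≤ α * y ^ (-β) / y * (E * (y ^ β / c) + E * κ) := by
          have := Real.rpow_nonneg hy0.le (-β)
          gcongr
      _ = _ := by unfold UU; field_simp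
  linarith

lemma exists_N (α b β : ℝ) (hα : 0 < α) (hb : 0 < b) (hβ0 : 0 < β) :
    ∃ N : ℕ, ∀ K : ℕ, N ≤ K → α * ((K : ℝ) + b) ^ (-β) ≤ 1 / 2 := by
  have h1 : Filter.Tendsto (fun K : ℕ => (K : ℝ) + b) Filter.atTop Filter.atTop :=
    Filter.tendsto_atTop_add_const_right _ _ tendsto_natCast_atTop_atTop
  have h2 := ((tendsto_rpow_neg_atTop hβ0).comp h1).const_mul α
  rw [mul_zero] at h2
  have h3 := h2.eventually (ge_mem_nhds (by norm_num : (0:ℝ) < 1 / 2))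
  obtain ⟨N, hN⟩ := Filter.eventually_atTop.1 h3
  exact ⟨N, fun K hK => hN K hK⟩

lemma norm_SS_le {n : Type} [Fintype n] [Nonempty n] [DecidableEq n]
    (A : Matrix n n ℝ) (α b β c X : ℝ) (hα : 0 < α) (hb : 0 < b) (h0 : 0 < β) (h1 : β < 1)
    (hc : 0 < c) (hX : 0 < X) (hXe : X ^ β / X = α * c / 2)
    (hA : ∀ j : ℕ, ‖(1 : Matrix n n ℝ) - (α * ((j : ℝ) + b) ^ (-β)) • A‖
      ≤ 1 - c * (α * ((j : ℝ) + b) ^ (-β))) (K : ℕ) :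
    ∀ m i : ℕ, i + m = K →
      ‖SS A (fun j => α * ((j : ℝ) + b) ^ (-β)) i K‖ ≤ VV α β c X (i + b) := by
  intro m
  induction m with
  | zero =>
    intro i hi
    obtain rfl : i = K := by omega
    rw [SS_self, norm_zero]
    exact VV_nonneg _ _ _ _ _ hα hc hX
  | succ m ih =>
    intro i hi
    rw [SS_succ _ _ _ _ (by omega)]
    have h2 := ih (i + 1) (by omega)
    have h3 := hA (i + 1)
    have hs := VV_step α β c X (((i + 1 : ℕ) : ℝ) + b) hα h0 h1 hc hX hXe
      (by push_cast; have : (0:ℝ) ≤ i := Nat.cast_nonneg i; linarith)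
    rw [show (((i + 1 : ℕ) : ℝ) + b) - 1 = i + b by push_cast; ring] at hs
    refine le_trans (norm_add_le _ _) ?_
    rw [norm_one_mat]
    refine le_trans ?_ hs
    gcongr
    exact (norm_mul_le _ _).trans
      (mul_le_mul h3 h2 (norm_nonneg _) ((norm_nonneg _).trans h3))

lemma norm_HH_le {n : Type} [Fintype n] [Nonempty n] [DecidableEq n]
    (A : Matrix n n ℝ) (α b β c X κ E : ℝ) (hα : 0 < α) (hb : 0 < b) (h0 : 0 < β) (h1 : β < 1)
    (hc : 0 < c) (hX : 0 < X) (hXe : X ^ β / X = α * c / 2)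
    (hκ : 0 < κ) (hE1 : 2 * (2 / α) ≤ E) (hE2 : 2 * (2 * X) ≤ E * κ)
    (hU : IsUnit A)
    (hA : ∀ j : ℕ, ‖(1 : Matrix n n ℝ) - (α * ((j : ℝ) + b) ^ (-β)) • A‖
      ≤ 1 - c * (α * ((j : ℝ) + b) ^ (-β))) (hI : ‖A⁻¹‖ ≤ 1 / c) (K : ℕ) :
    ∀ m i : ℕ, i + m = K → 1 ≤ i →
      ‖(α * ((i : ℝ) + b) ^ (-β)) • SS A (fun j => α * ((j : ℝ) + b) ^ (-β)) i K - A⁻¹‖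
        ≤ UU E β c κ (i + b) + (1 - c * (α * ((K : ℝ) + b) ^ (-β))) ^ m / c := by
  have hE : 0 < E := lt_of_lt_of_le (by positivity) hE1
  intro m
  induction m with
  | zero =>
    intro i hi h1i
    obtain rfl : i = K := by omega
    rw [SS_self, smul_zero, zero_sub, norm_neg, pow_zero]
    have : 0 ≤ UU E β c κ (i + b) := by unfold UU; positivity
    linarith
  | succ m ih =>
    intro i hi h1i
    have h1r : (1:ℝ) ≤ i := by exact_mod_cast h1i
    have h2 := ih (i + 1) (by omega) (by omega)
    have h3 := hA (i + 1)
    have hS := norm_SS_le A α b β c X hα hb h0 h1 hc hX hXe hA K (m + 1) i hi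
    have hs := UU_step α β c κ X E (((i + 1 : ℕ) : ℝ) + b) hα h0 h1 hc hX hκ hXe
      (by push_cast; linarith) hE1 hE2
    rw [show (((i + 1 : ℕ) : ℝ) + b) - 1 = i + b by push_cast; ring] at hs
    have hmon : ∀ j k : ℕ, j ≤ k → α * ((k : ℝ) + b) ^ (-β) ≤ α * ((j : ℝ) + b) ^ (-β) := by
      intro j k hjk
      have : (j:ℝ) ≤ k := by exact_mod_cast hjk
      apply mul_le_mul_of_nonneg_left _ hα.le
      exact Real.rpow_le_rpow_of_nonpos (by positivity) (by linarith) (by linarith)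
    have m1 := hmon i (i+1) (by omega)
    have m2 := hmon (i+1) K (by omega)
    have hK := (norm_nonneg _).trans (hA K)
    have hSS := SS_succ A (fun j => α * ((j : ℝ) + b) ^ (-β)) i K (by omega)
    have hn := (norm_nonneg _).trans h3
    set S := SS A (fun j => α * ((j : ℝ) + b) ^ (-β)) i K
    set S' := SS A (fun j => α * ((j : ℝ) + b) ^ (-β)) (i+1) K
    have hs' : (α * ((i:ℝ) + b) ^ (-β) - α * (((i+1:ℕ):ℝ) + b) ^ (-β)) * VV α β c X (i + b)
      + (1 - c * (α * (((i+1:ℕ):ℝ) + b) ^ (-β))) * UU E β c κ (((i+1:ℕ):ℝ) + b)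
        ≤ UU E β c κ (i + b) := by rw [← mul_sub]; exact hs
    clear hs
    generalize α * ((i:ℝ) + b) ^ (-β) = x at *
    generalize α * (((i+1:ℕ):ℝ) + b) ^ (-β) = y at *
    generalize α * ((K:ℝ) + b) ^ (-β) = z at *
    have hAA : A * A⁻¹ = 1 := Matrix.mul_nonsing_inv A ((Matrix.isUnit_iff_isUnit_det A).1 hU)
    have e : x • S - A⁻¹ = (x - y) • S + (1 - y • A) * (y • S' - A⁻¹) := by
      have : y • S = y • (1 : Matrix n n ℝ) + (1 - y • A) * (y • S') := by
        rw [hSS, smul_add, mul_smul_comm]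
      rw [sub_smul, mul_sub, this, sub_mul 1 (y • A) A⁻¹, smul_mul_assoc, hAA, one_mul]
      abel
    rw [e]
    have n1 : ‖(x - y) • S‖ ≤ (x - y) * VV α β c X (i + b) := by
      rw [norm_smul, Real.norm_of_nonneg (by linarith)]
      exact mul_le_mul_of_nonneg_left hS (by linarith)
    have n2 : ‖(1 - y • A) * (y • S' - A⁻¹)‖ ≤
        (1 - c * y) * (UU E β c κ (((i+1:ℕ):ℝ) + b) + (1 - c * z) ^ m / c) :=
      (norm_mul_le _ _).trans (mul_le_mul h3 h2 (norm_nonneg _) hn)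
    have n3 : (1 - c * y) * ((1 - c * z) ^ m / c) ≤ (1 - c * z) ^ (m + 1) / c := by
      rw [pow_succ, mul_comm ((1 - c * z) ^ m), mul_div_assoc]
      apply mul_le_mul_of_nonneg_right
      · nlinarith
      · positivity
    refine (norm_add_le _ _).trans ?_
    linarith

set_option maxHeartbeats 1000000 in
/-- Pointwise bound on the deviation of Ψ_i^K from A⁻¹
(equation (13) in the proof of Lemma 4). -/
theorem pointwise_bound_deviation_Psi_from_inverse
    (α b β : ℝ) (hα : 0 < α) (hb : 0 < b) (hβ0 : 0 < β) (hβ1 : β < 1) :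
    ∃ C : ℝ, 0 < C ∧
      ∀ (n : Type) [Fintype n] [Nonempty n] [DecidableEq n],
        ∀ (A : Matrix n n ℝ) (c : ℝ), IsUnit A → 0 < c → c ≤ 1 →
          (∀ j : ℕ, normInf ((1 : Matrix n n ℝ)
              - (α * ((j : ℝ) + b) ^ (-β)) • A) ≤ 1 - c * (α * ((j : ℝ) + b) ^ (-β))) →
          normInf A⁻¹ ≤ 1 / c →
          ∀ i K : ℕ, 1 ≤ i → i ≤ K →
            normInf (Psi A (fun j => α * ((j : ℝ) + b) ^ (-β)) i K - A⁻¹) ≤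
              C * (1 / ((i : ℝ) * c ^ ((2 - β) / (1 - β)))
                + ((i : ℝ) - 1) ^ β / ((i : ℝ) * c ^ 2)
                + (1 - c * (α * ((K : ℝ) + b) ^ (-β))) ^ (K - i + 1) / c) := by
  obtain ⟨N, hN⟩ := exists_N α b β hα hb hβ0
  set t : ℝ := (α / 2) ^ (-(1 / (1 - β))) with ht
  have htp : 0 < t := Real.rpow_pos_of_pos (by positivity) _
  set E : ℝ := 4 / α + 4 * t with hEdef
  have hE : 0 < E := by positivity
  have hb1 : 0 < 1 - β := by linarith
  refine ⟨E * (2 + b) + E + N + 2, by positivity, ?_⟩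
  intro n _ _ _ A c hU hc hc1 hA hI i K hi hiK
  set κ : ℝ := c ^ (-(1 / (1 - β))) with hκdef
  have hκ : 0 < κ := Real.rpow_pos_of_pos hc _
  have hX : 0 < t * κ := by positivity
  have hXe : (t * κ) ^ β / (t * κ) = α * c / 2 := by
    rw [← Real.rpow_sub_one hX.ne', ht, hκdef, ← Real.mul_rpow (by positivity) hc.le,
      ← Real.rpow_mul (by positivity)]
    rw [show -(1 / (1 - β)) * (β - 1) = 1 by field_simp; ring, Real.rpow_one]
    ring
  have hκ1 : 1 / c ≤ κ := by
    rw [one_div, ← Real.rpow_neg_one, hκdef]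
    apply Real.rpow_le_rpow_of_exponent_ge hc hc1
    rw [neg_le_neg_iff, le_div_iff₀ hb1]; linarith
  have hp : 1 / c ^ ((2 - β) / (1 - β)) = κ / c := by
    rw [show (2 - β) / (1 - β) = 1 + 1 / (1 - β) by field_simp; ring, Real.rpow_add hc,
      Real.rpow_one, hκdef, Real.rpow_neg hc.le]
    field_simp
  simp only [normInf_eq] at hA hI ⊢
  have hmain := norm_HH_le A α b β c (t * κ) κ E hα hb hβ0 hβ1 hc hX hXe hκ
    (by rw [hEdef]; ring_nf; linarith)
    (by rw [hEdef]; have : 0 < 4 / α * κ := by positivity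
        nlinarith) hU hA hI K (K - i) i (by omega) hi
  change ‖(α * ((i : ℝ) + b) ^ (-β)) • SS A (fun j => α * ((j : ℝ) + b) ^ (-β)) i K - A⁻¹‖ ≤ _
  refine hmain.trans ?_
  have hi1 : (1:ℝ) ≤ i := by exact_mod_cast hi
  have hi0 : (0:ℝ) < i := by linarith
  have hT1 : 1 / ((i : ℝ) * c ^ ((2 - β) / (1 - β))) = κ / c / i := by
    rw [← hp]; field_simp
  rw [hT1]
  have hK0 := (norm_nonneg _).trans (hA K)
  have hKpos : 0 ≤ α * ((K:ℝ) + b) ^ (-β) := by positivity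
  have hNK := hN K
  -- third term
  have h3 : (1 - c * (α * ((K : ℝ) + b) ^ (-β))) ^ (K - i) / c ≤
      2 * ((1 - c * (α * ((K : ℝ) + b) ^ (-β))) ^ (K - i + 1) / c) + N * (κ / c / i) := by
    generalize α * ((K:ℝ) + b) ^ (-β) = z at *
    by_cases h : N ≤ K
    · have hz := hNK h
      have : 1 / 2 ≤ 1 - c * z := by nlinarith
      have h5 : (1 - c * z) ^ (K - i) ≤ 2 * (1 - c * z) ^ (K - i + 1) := by
        rw [pow_succ]
        nlinarith [pow_nonneg hK0 (K - i)]
      have h6 : (1 - c * z) ^ (K - i) / c ≤ 2 * (1 - c * z) ^ (K - i + 1) / c := by gcongr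
      have : 0 ≤ N * (κ / c / i) := by positivity
      rw [mul_div_assoc] at h6
      linarith
    · have hcz : 0 ≤ c * z := by positivity
      have h5 : (1 - c * z) ^ (K - i) ≤ 1 := pow_le_one₀ hK0 (by linarith)
      have h6 : (1 - c * z) ^ (K - i) / c ≤ 1 / c := by gcongr
      have h7 : (i:ℝ) ≤ N := by exact_mod_cast (by omega : i ≤ N)
      have h8 : 1 / c ≤ N * (κ / c / i) := by
        have : 1 ≤ κ := le_trans (by rw [le_div_iff₀ hc]; linarith) hκ1
        rw [show N * (κ / c / i) = (N / i) * κ * (1 / c) by field_simp]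
        have h9 : 1 ≤ (N:ℝ) / i := by rw [le_div_iff₀ hi0]; linarith
        have : 1 ≤ (N / i) * κ := one_le_mul_of_one_le_of_one_le h9 this
        exact le_mul_of_one_le_left (by positivity) this
      have : 0 ≤ 2 * ((1 - c * z) ^ (K - i + 1) / c) := by positivity
      linarith
  have hib : (0:ℝ) < i + b := by linarith
  have hU1 : κ / c / (i + b) ≤ κ / c / i :=
    div_le_div_of_nonneg_left (by positivity) hi0 (by linarith)
  have hU2 : ((i:ℝ) + b) ^ β / (i + b) / c ^ 2 ≤
      (2 + b) * (κ / c / i + ((i : ℝ) - 1) ^ β / ((i : ℝ) * c ^ 2)) := by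
    have g1 : ((i:ℝ) + b) ^ β / (i + b) / c ^ 2 ≤ ((i:ℝ) + b) ^ β / i / c ^ 2 := by
      gcongr; linarith
    refine g1.trans ?_
    have hpow : ∀ x : ℝ, 1 ≤ x → x ^ β ≤ x := by
      intro x hx
      simpa using Real.rpow_le_rpow_of_exponent_le hx hβ1.le
    rcases hi.eq_or_lt with h | h
    · subst h
      have q1 : ((1:ℕ):ℝ) + b ≥ 1 := by push_cast; linarith
      have q2 := hpow _ q1
      have q3 : 1 / c ^ 2 ≤ κ / c := by
        rw [show 1 / c ^ 2 = 1 / c / c by field_simp]; gcongr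
      have q4 : (0:ℝ) ≤ (((1:ℕ):ℝ) - 1) ^ β / (((1:ℕ) : ℝ) * c ^ 2) := by
        have : (0:ℝ) ≤ (((1:ℕ):ℝ) - 1) ^ β := by
          apply Real.rpow_nonneg; simp
        positivity
      calc (((1:ℕ):ℝ) + b) ^ β / ((1:ℕ):ℝ) / c ^ 2 = (((1:ℕ):ℝ) + b) ^ β * (1 / c ^ 2) := by
            push_cast; ring
        _ ≤ (2 + b) * (κ / c) := by
            apply mul_le_mul _ q3 (by positivity) (by positivity)
            push_cast at q2 ⊢; linarith
        _ ≤ _ := by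
            apply mul_le_mul_of_nonneg_left _ (by positivity)
            have : κ / c / ((1:ℕ):ℝ) = κ / c := by simp
            linarith
    · have h2i : (2:ℝ) ≤ i := by exact_mod_cast h
      have q1 : ((i:ℝ) + b) ^ β ≤ (2 + b) * ((i:ℝ) - 1) ^ β := by
        calc ((i:ℝ) + b) ^ β ≤ ((2 + b) * ((i:ℝ) - 1)) ^ β := by
              apply Real.rpow_le_rpow hib.le _ hβ0.le
              nlinarith
          _ = (2 + b) ^ β * ((i:ℝ) - 1) ^ β := Real.mul_rpow (by positivity) (by linarith)
          _ ≤ _ := by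
              apply mul_le_mul_of_nonneg_right (hpow _ (by linarith))
              exact Real.rpow_nonneg (by linarith) _
      calc ((i:ℝ) + b) ^ β / i / c ^ 2 ≤ (2 + b) * ((i:ℝ) - 1) ^ β / i / c ^ 2 := by gcongr
        _ = (2 + b) * (((i : ℝ) - 1) ^ β / ((i : ℝ) * c ^ 2)) := by field_simp
        _ ≤ _ := by
            apply mul_le_mul_of_nonneg_left _ (by positivity)
            have : 0 ≤ κ / c / i := by positivity
            linarith
  have hUU : UU E β c κ (i + b) ≤
      E * ((2 + b) * (κ / c / i + ((i : ℝ) - 1) ^ β / ((i : ℝ) * c ^ 2)) + κ / c / i) := by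
    unfold UU
    apply mul_le_mul_of_nonneg_left _ hE.le
    linarith
  refine (add_le_add hUU h3).trans ?_
  have t1 : 0 ≤ κ / c / i := by positivity
  have t2 : 0 ≤ ((i : ℝ) - 1) ^ β / ((i : ℝ) * c ^ 2) := by
    have : 0 ≤ ((i : ℝ) - 1) ^ β := Real.rpow_nonneg (by linarith) _
    positivity
  have t3 : 0 ≤ (1 - c * (α * ((K : ℝ) + b) ^ (-β))) ^ (K - i + 1) / c := by positivity
  generalize κ / c / (i:ℝ) = T1 at *
  generalize ((i : ℝ) - 1) ^ β / ((i : ℝ) * c ^ 2) = T2 at *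
  generalize (1 - c * (α * ((K : ℝ) + b) ^ (-β))) ^ (K - i + 1) / c = T3 at *
  have r1 : 0 ≤ (E + N + 2) * T2 := by positivity
  have r2 : 0 ≤ (E * (2 + b) + E + N) * T3 := by positivity
  linarith
end

section
/- Summed bound on the deviation of Ψ_i^K from A^{-1} (second bound of Lemma 4). Let α, b > 0, β ∈ (0,1), and α_j := α(j+b)^{−β}. Let c ∈ (0,1] and let A be an invertible n×n real matrix such that ‖I − α_j A‖∞ ≤ 1 − cα_j for all j ≥ 0 and ‖A^{-1}‖∞ ≤ 1/c. Then there exists a constant C > 0 depending only on α, b, and β such that for every integer K ≥ 1: ∑_{i=1}^{K} ‖Ψ_i^K − A^{-1}‖∞ ≤ C·( (1 + log K)·c^{−(2−β)/(1−β)} + K^β/c² ). -/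
open Finset

section helpers

attribute [local instance] Matrix.linftyOpNormedAddCommGroup Matrix.linftyOpNormedRing
  Matrix.linftyOpNormedSpace Matrix.linftyOpNormedAlgebra

theorem normInf_eq_norm {n : Type*} [Fintype n] [Nonempty n] (M : Matrix n n ℝ) :
    normInf M = ‖M‖ := by
  apply le_antisymm
  · unfold normInf
    apply Finset.sup'_le
    intro i _
    rw [Matrix.linfty_opNorm_def]
    have h : (∑ j, ‖M i j‖₊) ≤ Finset.univ.sup fun i => ∑ j, ‖M i j‖₊ :=
      Finset.le_sup (f := fun i => ∑ j, ‖M i j‖₊) (Finset.mem_univ i)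
    have h2 := NNReal.coe_le_coe.2 h
    simpa using h2
  · rw [Matrix.linfty_opNorm_def]
    obtain ⟨i, _, hi⟩ := Finset.exists_mem_eq_sup (Finset.univ : Finset n) Finset.univ_nonempty
      (fun i => ∑ j, ‖M i j‖₊)
    rw [hi]
    unfold normInf
    have := Finset.le_sup' (fun i => ∑ j, |M i j|) (Finset.mem_univ i)
    refine le_trans (le_of_eq ?_) this
    simp

theorem prodIco_succ {n : Type*} [Fintype n] [DecidableEq n]
    (A : Matrix n n ℝ) (a : ℕ → ℝ) (i k : ℕ) (h : i ≤ k) :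
    prodIco A a i (k + 1) = prodIco A a i k * (1 - a k • A) := by
  unfold prodIco
  rw [show k + 1 - i = (k - i) + 1 by omega, List.range'_concat]
  simp [show i + (k - i) = k by omega]

theorem prodIco_self {n : Type*} [Fintype n] [DecidableEq n]
    (A : Matrix n n ℝ) (a : ℕ → ℝ) (i : ℕ) : prodIco A a i i = 1 := by
  simp [prodIco]

theorem sum_prodIco {n : Type*} [Fintype n] [DecidableEq n]
    (A : Matrix n n ℝ) (hA : IsUnit A) (a : ℕ → ℝ) (i K : ℕ) (h : i ≤ K) :
    ∑ k ∈ Finset.Icc (i + 1) K, a k • prodIco A a (i + 1) k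
      = A⁻¹ - prodIco A a (i + 1) (K + 1) * A⁻¹ := by
  have hAA : A * A⁻¹ = 1 := Matrix.mul_nonsing_inv A ((Matrix.isUnit_iff_isUnit_det A).1 hA)
  induction K, h using Nat.le_induction with
  | base => simp [prodIco_self]
  | succ K hK ih =>
    rw [Finset.sum_Icc_succ_top (by omega), ih, prodIco_succ A a (i+1) (K+1) (by omega)]
    rw [mul_assoc, sub_mul, smul_mul_assoc, hAA, mul_sub]
    simp
    abel

theorem norm_prodIco_le {n : Type*} [Fintype n] [Nonempty n] [DecidableEq n]
    (A : Matrix n n ℝ) (a : ℕ → ℝ) (c : ℝ)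
    (h : ∀ j, ‖(1 : Matrix n n ℝ) - a j • A‖ ≤ 1 - c * a j) (i k : ℕ) (hik : i ≤ k) :
    ‖prodIco A a i k‖ ≤ ∏ j ∈ Finset.Ico i k, (1 - c * a j) := by
  induction k, hik using Nat.le_induction with
  | base =>
    rw [prodIco_self, ← normInf_eq_norm]
    unfold normInf
    simp only [Finset.Ico_self, Finset.prod_empty]
    apply Finset.sup'_le
    intro i _
    simp [Matrix.one_apply, apply_ite]
  | succ k hk ih =>
    rw [prodIco_succ _ _ _ _ hk, Finset.prod_Ico_succ_top hk]
    refine (norm_mul_le _ _).trans ?_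
    exact mul_le_mul ih (h k) (norm_nonneg _) ((norm_nonneg _).trans ih)

theorem dev_le {n : Type*} [Fintype n] [Nonempty n] [DecidableEq n]
    (A : Matrix n n ℝ) (hA : IsUnit A) (a : ℕ → ℝ) (ha : Antitone a) (c : ℝ)
    (h : ∀ j, normInf ((1 : Matrix n n ℝ) - a j • A) ≤ 1 - c * a j)
    (h2 : normInf A⁻¹ ≤ 1 / c) (i K : ℕ) (hik : i ≤ K) :
    normInf (Psi A a i K - A⁻¹) ≤
      ∑ k ∈ Finset.Icc (i+1) K, (a i - a k) * ∏ j ∈ Finset.Ico (i+1) k, (1 - c * a j)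
        + (∏ j ∈ Finset.Ico (i+1) (K+1), (1 - c * a j)) * (1 / c) := by
  simp only [normInf_eq_norm] at *
  have e : Psi A a i K - A⁻¹ = ∑ k ∈ Finset.Icc (i+1) K, (a i - a k) • prodIco A a (i+1) k
      - prodIco A a (i+1) (K+1) * A⁻¹ := by
    simp only [sub_smul, Finset.sum_sub_distrib]
    rw [sum_prodIco A hA a i K hik, Psi, Finset.smul_sum]
    abel
  rw [e]
  refine (norm_sub_le _ _).trans (add_le_add ?_ ?_)
  · refine (norm_sum_le _ _).trans (Finset.sum_le_sum ?_)
    intro k hk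
    rw [Finset.mem_Icc] at hk
    have h0 : 0 ≤ a i - a k := sub_nonneg.2 (ha (by omega))
    rw [norm_smul, Real.norm_of_nonneg h0]
    exact mul_le_mul_of_nonneg_left (norm_prodIco_le A a c h _ _ hk.1) h0
  · refine (norm_mul_le _ _).trans ?_
    have := norm_prodIco_le A a c h (i+1) (K+1) (by omega)
    exact mul_le_mul this h2 (norm_nonneg _) ((norm_nonneg _).trans this)

end helpers

theorem S_bound (a : ℕ → ℝ) (ha : Antitone a) (hpos : ∀ j, 0 < a j) (c : ℝ) (hc : 0 < c)
    (h1 : ∀ j, 0 ≤ 1 - c * a j) (k : ℕ) :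
    ∑ i ∈ Finset.Ico 1 (k+1), ∏ j ∈ Finset.Ico (i+1) (k+1), (1 - c * a j) ≤ 1 / (c * a k) := by
  induction k with
  | zero => simp; have := hpos 0; positivity
  | succ k ih =>
    rw [Finset.sum_Ico_succ_top (by omega)]
    have e : ∑ i ∈ Finset.Ico 1 (k+1), ∏ j ∈ Finset.Ico (i+1) (k+1+1), (1 - c * a j)
        = (∑ i ∈ Finset.Ico 1 (k+1), ∏ j ∈ Finset.Ico (i+1) (k+1), (1 - c * a j))
          * (1 - c * a (k+1)) := by
      rw [Finset.sum_mul]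
      apply Finset.sum_congr rfl
      intro i hi
      rw [Finset.mem_Ico] at hi
      rw [Finset.prod_Ico_succ_top (by omega)]
    rw [e]
    have hp := hpos (k+1)
    have hcp : 0 < c * a (k+1) := by positivity
    have h3 : 1 / (c * a k) ≤ 1 / (c * a (k+1)) := by
      apply one_div_le_one_div_of_le hcp
      exact mul_le_mul_of_nonneg_left (ha (Nat.le_succ k)) hc.le
    have h4 := mul_le_mul_of_nonneg_right (ih.trans h3) (h1 (k+1))
    have h5 : 1 / (c * a (k+1)) * (1 - c * a (k+1)) = 1 / (c * a (k+1)) - 1 := by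
      field_simp
    simp only [Finset.Ico_self, Finset.prod_empty]
    linarith

theorem T_rec (a : ℕ → ℝ) (c : ℝ) (k : ℕ) :
    ∑ i ∈ Finset.Ico 1 (k+1+1), (a i - a (k+1+1)) * ∏ j ∈ Finset.Ico (i+1) (k+1+1), (1 - c * a j)
    = (1 - c * a (k+1)) *
      ∑ i ∈ Finset.Ico 1 (k+1), (a i - a (k+1)) * ∏ j ∈ Finset.Ico (i+1) (k+1), (1 - c * a j)
      + (a (k+1) - a (k+1+1)) *
        ∑ i ∈ Finset.Ico 1 (k+1+1), ∏ j ∈ Finset.Ico (i+1) (k+1+1), (1 - c * a j) := by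
  have e : ∑ i ∈ Finset.Ico 1 (k+1+1), (a i - a (k+1+1)) *
      ∏ j ∈ Finset.Ico (i+1) (k+1+1), (1 - c * a j)
      = ∑ i ∈ Finset.Ico 1 (k+1+1), (a i - a (k+1)) * ∏ j ∈ Finset.Ico (i+1) (k+1+1), (1 - c * a j)
      + (a (k+1) - a (k+1+1)) *
        ∑ i ∈ Finset.Ico 1 (k+1+1), ∏ j ∈ Finset.Ico (i+1) (k+1+1), (1 - c * a j) := by
    rw [Finset.mul_sum, ← Finset.sum_add_distrib]
    apply Finset.sum_congr rfl
    intro i _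
    ring
  rw [e, Finset.sum_Ico_succ_top (by omega)]
  congr 1
  rw [Finset.mul_sum]
  simp only [sub_self, zero_mul, add_zero]
  apply Finset.sum_congr rfl
  intro i hi
  rw [Finset.mem_Ico] at hi
  rw [Finset.prod_Ico_succ_top (by omega)]
  ring

theorem potential (T w r e : ℕ → ℝ) (hT : ∀ k, 0 ≤ T k) (hw : ∀ k, 0 ≤ w k) (hT1 : T 1 = 0)
    (hrec : ∀ k, 1 ≤ k → T (k+1) ≤ r k * T k + e k)
    (hwr : ∀ k, 1 ≤ k → 1 + w (k+1) * r k ≤ w k) (K : ℕ) :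
    ∑ k ∈ Finset.Icc 1 K, T k + w (K+1) * T (K+1) ≤ ∑ k ∈ Finset.Icc 1 K, w (k+1) * e k := by
  induction K with
  | zero => simp [hT1]
  | succ K ih =>
    rw [Finset.sum_Icc_succ_top (by omega), Finset.sum_Icc_succ_top (by omega)]
    have h1 := mul_le_mul_of_nonneg_left (hrec (K+1) (by omega)) (hw (K+1+1))
    have h2 := mul_le_mul_of_nonneg_right (hwr (K+1) (by omega)) (hT (K+1))
    nlinarith

theorem rpow_step (x β : ℝ) (hx : 0 < x) (h0 : 0 < β) (h1 : β < 1) :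
    (x + 1) ^ β ≤ x ^ β * (1 + β / x) := by
  have : x + 1 = x * (1 + 1 / x) := by field_simp
  rw [this, Real.mul_rpow hx.le (by positivity)]
  apply mul_le_mul_of_nonneg_left _ (by positivity)
  have h := rpow_one_add_le_one_add_mul_self (s := 1 / x) (p := β)
    (by have : 0 < 1 / x := by positivity
        linarith) h0.le h1.le
  calc _ ≤ _ := h
    _ = _ := by ring

theorem sum_rpow_le (β : ℝ) (h0 : 0 < β) (h1 : β < 1) (K : ℕ) :
    ∑ k ∈ Finset.Icc 1 K, (k : ℝ) ^ β / k ≤ (K : ℝ) ^ β / β := by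
  induction K with
  | zero => simp [Real.zero_rpow h0.ne']
  | succ K ih =>
    rw [Finset.sum_Icc_succ_top (by omega)]
    have hx : (0:ℝ) < (K:ℝ) + 1 := by positivity
    have e : (K : ℝ) = ((K:ℝ) + 1) * (1 + -(1 / ((K:ℝ)+1))) := by field_simp; ring
    have hle : 1 / ((K:ℝ)+1) ≤ 1 := by
      rw [div_le_one hx]; linarith [Nat.cast_nonneg (α := ℝ) K]
    have h := rpow_one_add_le_one_add_mul_self (s := -(1 / ((K:ℝ)+1))) (p := β)
      (by linarith) h0.le h1.le
    have h2 : (K:ℝ) ^ β ≤ ((K:ℝ)+1)^β * (1 + β * -(1 / ((K:ℝ)+1))) := by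
      conv_lhs => rw [e]
      rw [Real.mul_rpow hx.le (by linarith)]
      exact mul_le_mul_of_nonneg_left h (by positivity)
    push_cast
    have h3 := div_le_div_of_nonneg_right h2 h0.le
    have h4 : ((K:ℝ)+1)^β * (1 + β * -(1 / ((K:ℝ)+1))) / β
      = ((K:ℝ)+1)^β / β - ((K:ℝ)+1)^β / ((K:ℝ)+1) := by field_simp; ring
    linarith

theorem sum_inv_le (K : ℕ) :
    ∑ k ∈ Finset.Icc 1 K, 1 / (k : ℝ) ≤ 1 + Real.log K := by
  have h := harmonic_le_one_add_log K
  rw [harmonic_eq_sum_Icc] at h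
  push_cast at h
  simpa using h

theorem rpow_mul_le (M x β : ℝ) (hM : 1 ≤ M) (hx : 0 ≤ x) (h1 : β < 1) :
    (M * x) ^ β ≤ M * x ^ β := by
  rw [Real.mul_rpow (by linarith) hx]
  apply mul_le_mul_of_nonneg_right _ (by positivity)
  exact (Real.rpow_le_rpow_of_exponent_le hM h1.le).trans (Real.rpow_one M).le

theorem scalar_bound (α b β : ℝ) (hα : 0 < α) (hb : 0 < b) (h0 : 0 < β) (hβ1 : β < 1)
    (E : ℝ) (hE : E = (2 * β / α) ^ (1 / (1 - β)) + 1 + b)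
    (c : ℝ) (hc : 0 < c) (hc1 : c ≤ 1) (u a : ℕ → ℝ) (hu : ∀ k, u k = ((k:ℝ) + b) ^ β)
    (ha : ∀ k, a k = α / u k) (hanti : Antitone a) (h1 : ∀ j, 0 ≤ 1 - c * a j) (K : ℕ) :
    ∑ k ∈ Finset.Icc 1 K, ∑ i ∈ Finset.Ico 1 k,
        (a i - a k) * ∏ j ∈ Finset.Ico (i+1) k, (1 - c * a j) ≤
      (2 * (2 + b) / (α * β)) * ((K:ℝ)^β / c^2) +
        (2 * E / α + E) * ((1 + Real.log K) * c ^ (-(2 - β) / (1 - β))) := by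
  have hb1 : 0 < 1 - β := by linarith
  have hxpos : ∀ k : ℕ, (0:ℝ) < (k:ℝ) + b := fun k => by positivity
  have hupos : ∀ k, 0 < u k := fun k => by rw [hu]; exact Real.rpow_pos_of_pos (hxpos k) _
  have hapos : ∀ k, 0 < a k := fun k => by rw [ha]; exact div_pos hα (hupos k)
  have humono : Monotone u := by
    intro i j hij
    rw [hu, hu]
    have : (i:ℝ) ≤ j := by exact_mod_cast hij
    exact Real.rpow_le_rpow (hxpos i).le (by linarith) h0.le
  have hstep : ∀ k, u (k+1) ≤ u k * (1 + β / ((k:ℝ)+b)) := by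
    intro k
    have := rpow_step ((k:ℝ)+b) β (hxpos k) h0 hβ1
    rw [hu, hu]
    push_cast
    rwa [show (k:ℝ) + 1 + b = (k:ℝ) + b + 1 by ring]
  set γ := 1 / (1 - β) with hγ
  set y := (2 * β / (c * α)) ^ γ with hy
  set k0 := ⌈y⌉₊ with hk0
  have hγpos : 0 < γ := by positivity
  have hy0 : 0 ≤ y := by positivity
  have hcg : 1 ≤ c ^ (-γ) := Real.one_le_rpow_of_pos_of_le_one_of_nonpos hc hc1 (by linarith)
  have hyD : y = (2 * β / α) ^ γ * c ^ (-γ) := by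
    rw [hy, Real.rpow_neg hc.le, ← Real.inv_rpow hc.le, ← Real.mul_rpow (by positivity) (by positivity)]
    congr 1
    field_simp
  have hD0 : 0 ≤ (2 * β / α) ^ γ := by positivity
  have hE1 : 1 ≤ E := by rw [hE]; linarith
  have hk0E : (k0:ℝ) + b ≤ E * c ^ (-γ) := by
    have := (Nat.ceil_lt_add_one hy0).le
    rw [← hk0, hyD] at this
    rw [hE]
    nlinarith
  have huk0 : u k0 / (c * α) ≤ E / α * c ^ (-γ) := by
    have h2 : u k0 ≤ E * (c ^ (-γ)) ^ β := by
      rw [hu]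
      exact (Real.rpow_le_rpow (hxpos k0).le hk0E h0.le).trans
        (rpow_mul_le E _ β hE1 (by positivity) hβ1)
    have h3 : (c ^ (-γ)) ^ β = c ^ (-γ) * c := by
      rw [← Real.rpow_mul hc.le]
      nth_rewrite 3 [← Real.rpow_one c]
      rw [← Real.rpow_add hc]
      congr 1
      rw [hγ]; field_simp; ring
    rw [h3] at h2
    calc u k0 / (c * α) ≤ (E * (c ^ (-γ) * c)) / (c * α) := by gcongr
      _ = _ := by field_simp
  have hlarge : ∀ k, k0 ≤ k → 2 * β * u k ≤ c * α * ((k:ℝ) + b) := by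
    intro k hk
    have hyx : y ≤ (k:ℝ) + b := by
      have h2 : y ≤ (k0:ℝ) := Nat.le_ceil y
      have h3 : (k0:ℝ) ≤ k := by exact_mod_cast hk
      linarith
    have h4 := Real.rpow_le_rpow hy0 hyx hb1.le
    rw [hy, ← Real.rpow_mul (by positivity), hγ, one_div_mul_cancel hb1.ne', Real.rpow_one,
      Real.rpow_sub (hxpos k), Real.rpow_one, ← hu, div_le_div_iff₀ (by positivity) (hupos k)] at h4
    linarith
  set w : ℕ → ℝ := fun k => 2 * u (max k k0) / (c * α) + ((k0 - k : ℕ) : ℝ) with hw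
  have hw0 : ∀ k, 0 ≤ w k := fun k => by
    have := hupos (max k k0)
    simp only [hw]; positivity
  have hwr : ∀ k, 1 ≤ k → 1 + w (k+1) * (1 - c * a k) ≤ w k := by
    intro k _
    rcases lt_or_ge k k0 with hk | hk
    · have e1 : w (k+1) + 1 = w k := by
        simp only [hw]
        rw [max_eq_right (by omega), max_eq_right (by omega), show k0 - k = k0 - (k+1) + 1 by omega]
        push_cast; ring
      have : 0 ≤ w (k+1) * (c * a k) := mul_nonneg (hw0 _) (mul_nonneg hc.le (hapos k).le)
      linarith
    · have e1 : w (k+1) = 2 * u (k+1) / (c * α) := by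
        simp only [hw]
        rw [max_eq_left (by omega), show k0 - (k+1) = 0 by omega]; simp
      have e2 : w k = 2 * u k / (c * α) := by
        simp only [hw]
        rw [max_eq_left (by omega), show k0 - k = 0 by omega]; simp
      have h2 : 2 ≤ w (k+1) * (c * a k) := by
        rw [e1, ha]
        have : 2 * u (k+1) / (c * α) * (c * (α / u k)) = 2 * (u (k+1) / u k) := by
          field_simp
        rw [this]
        have : 1 ≤ u (k+1) / u k := by
          rw [one_le_div (hupos k)]; exact humono (Nat.le_succ k)
        linarith
      have h3 : w (k+1) - w k ≤ 1 := by
        rw [e1, e2, ← sub_div, div_le_one (by positivity)]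
        have h4 := hlarge k hk
        have h5 := hstep k
        have h6 : 2 * β * u k / ((k:ℝ)+b) ≤ c * α := by
          rw [div_le_iff₀ (hxpos k)]; exact h4
        have h7 : u k * (1 + β / ((k:ℝ)+b)) = u k + (2 * β * u k / ((k:ℝ)+b)) / 2 := by
          field_simp
        linarith
      linarith
  have hinc : ∀ k, (a k - a (k+1)) * (1 / (c * a k)) ≤ β / (c * ((k:ℝ) + b)) := by
    intro k
    have h2 : (a k - a (k+1)) * (1 / (c * a k)) = (1 - u k / u (k+1)) / c := by
      rw [ha, ha]
      have := hupos k
      have := hupos (k+1)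
      field_simp
    have h3 : 1 - u k / u (k+1) ≤ β / ((k:ℝ)+b) := by
      have h5 := hstep k
      have := hupos (k+1)
      rw [sub_le_iff_le_add, ← sub_le_iff_le_add', le_div_iff₀ this]
      have h6 : u k ≤ u (k+1) := humono (Nat.le_succ k)
      have h7 : 0 < β / ((k:ℝ)+b) := div_pos h0 (hxpos k)
      nlinarith
    rw [h2]
    calc _ ≤ β / ((k:ℝ)+b) / c := by gcongr
      _ = _ := by field_simp
  have hpot := potential (fun k => ∑ i ∈ Finset.Ico 1 k,
        (a i - a k) * ∏ j ∈ Finset.Ico (i+1) k, (1 - c * a j)) w (fun k => 1 - c * a k)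
        (fun k => β / (c * ((k:ℝ)+b)))
        (by
          intro k
          apply Finset.sum_nonneg
          intro i hi
          rw [Finset.mem_Ico] at hi
          exact mul_nonneg (sub_nonneg.2 (hanti (by omega))) (Finset.prod_nonneg fun j _ => h1 j))
        hw0 (by simp)
        (by
          intro k hk
          obtain ⟨k, rfl⟩ : ∃ m, k = m + 1 := ⟨k - 1, by omega⟩
          rw [T_rec]
          have h2 := S_bound a hanti hapos c hc h1 (k+1)
          have h3 := mul_le_mul_of_nonneg_left h2 (sub_nonneg.2 (hanti (Nat.le_succ (k+1))))
          exact add_le_add le_rfl (h3.trans (hinc (k+1))))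
        hwr K
  have hlast : 0 ≤ w (K+1) * ∑ i ∈ Finset.Ico 1 (K+1),
        (a i - a (K+1)) * ∏ j ∈ Finset.Ico (i+1) (K+1), (1 - c * a j) := by
    apply mul_nonneg (hw0 _)
    apply Finset.sum_nonneg
    intro i hi
    rw [Finset.mem_Ico] at hi
    exact mul_nonneg (sub_nonneg.2 (hanti (by omega))) (Finset.prod_nonneg fun j _ => h1 j)
  have hterm : ∀ k ∈ Finset.Icc 1 K, w (k+1) * (β / (c * ((k:ℝ)+b))) ≤
      (2 * (2 + b) / (α * c^2)) * ((k:ℝ)^β / k)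
        + ((2 * E / α + E) * (c ^ (-γ) / c)) * (1 / (k:ℝ)) := by
    intro k hk
    rw [Finset.mem_Icc] at hk
    have hk1 : (1:ℝ) ≤ k := by exact_mod_cast hk.1
    have hkp : (0:ℝ) < k := by linarith
    have h2 : u (k+1) ≤ (2+b) * (k:ℝ)^β := by
      rw [hu]
      push_cast
      refine (Real.rpow_le_rpow (by positivity) ?_ h0.le).trans
        (rpow_mul_le (2+b) k β (by linarith) hkp.le hβ1)
      nlinarith
    have h3 : u (max (k+1) k0) ≤ u (k+1) + u k0 := by
      rcases max_choice (k+1) k0 with h | h <;> rw [h] <;> linarith [hupos (k+1), hupos k0]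
    have h4 : ((k0 - (k+1) : ℕ):ℝ) ≤ E * c ^ (-γ) := by
      have : ((k0 - (k+1) : ℕ):ℝ) ≤ k0 := by exact_mod_cast Nat.sub_le _ _
      linarith
    have h5 : w (k+1) ≤ 2 * (2+b) / (α * c) * (k:ℝ)^β + (2 * E / α + E) * c ^ (-γ) := by
      simp only [hw]
      have h6 : 2 * u (max (k+1) k0) / (c*α) ≤ 2 * ((2+b) * (k:ℝ)^β) / (c * α) + 2 * (u k0 / (c * α)) := by
        calc _ ≤ 2 * ((2+b) * (k:ℝ)^β + u k0) / (c * α) := by gcongr; linarith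
          _ = _ := by ring
      have h7 : 2 * ((2+b) * (k:ℝ)^β) / (c * α) = 2 * (2+b) / (α * c) * (k:ℝ)^β := by ring
      have h8 : (2 * E / α + E) * c ^ (-γ) = 2 * (E / α * c ^ (-γ)) + E * c ^ (-γ) := by ring
      linarith
    have h6 : β / (c * ((k:ℝ)+b)) ≤ 1 / (c * k) := by
      gcongr
      linarith
    have h7 : 0 ≤ β / (c * ((k:ℝ)+b)) := by positivity
    calc _ ≤ (2 * (2+b) / (α * c) * (k:ℝ)^β + (2 * E / α + E) * c ^ (-γ)) * (1 / (c * k)) :=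
          mul_le_mul h5 h6 h7 ((hw0 _).trans h5)
      _ = _ := by field_simp
  have hsum := Finset.sum_le_sum hterm
  rw [Finset.sum_add_distrib, ← Finset.mul_sum, ← Finset.mul_sum] at hsum
  have g1 := mul_le_mul_of_nonneg_left (sum_rpow_le β h0 hβ1 K)
    (show 0 ≤ 2 * (2 + b) / (α * c^2) by positivity)
  have g2 := mul_le_mul_of_nonneg_left (sum_inv_le K)
    (show 0 ≤ (2 * E / α + E) * (c ^ (-γ) / c) by positivity)
  have g3 : c ^ (-γ) / c = c ^ (-(2 - β) / (1 - β)) := by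
    nth_rewrite 2 [← Real.rpow_one c]
    rw [← Real.rpow_sub hc]
    congr 1
    rw [hγ]; field_simp; ring
  rw [g3] at g2 hsum
  have g4 : 2 * (2 + b) / (α * c^2) * ((K:ℝ)^β / β) = (2 * (2 + b) / (α * β)) * ((K:ℝ)^β / c^2) := by
    field_simp
  have g5 : (2 * E / α + E) * c ^ (-(2 - β) / (1 - β)) * (1 + Real.log K)
    = (2 * E / α + E) * ((1 + Real.log K) * c ^ (-(2 - β) / (1 - β))) := by ring
  linarith

/-- Summed bound on the deviation of Ψ_i^K from A⁻¹ (second bound of Lemma 4). -/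
theorem summed_bound_deviation_Psi_from_inverse
    (α b β : ℝ) (hα : 0 < α) (hb : 0 < b) (hβ0 : 0 < β) (hβ1 : β < 1) :
    ∃ C : ℝ, 0 < C ∧
      ∀ (n : Type) [Fintype n] [Nonempty n] [DecidableEq n],
        ∀ (A : Matrix n n ℝ) (c : ℝ), IsUnit A → 0 < c → c ≤ 1 →
          (∀ j : ℕ, normInf ((1 : Matrix n n ℝ)
              - (α * ((j : ℝ) + b) ^ (-β)) • A) ≤ 1 - c * (α * ((j : ℝ) + b) ^ (-β))) →
          normInf A⁻¹ ≤ 1 / c →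
          ∀ K : ℕ, 1 ≤ K →
            ∑ i ∈ Finset.Icc 1 K,
                normInf (Psi A (fun j => α * ((j : ℝ) + b) ^ (-β)) i K - A⁻¹) ≤
              C * ((1 + Real.log (K : ℝ)) * c ^ (-(2 - β) / (1 - β))
                + (K : ℝ) ^ β / c ^ 2) := by
  set E : ℝ := (2 * β / α) ^ (1 / (1 - β)) + 1 + b with hE
  have hb1 : 0 < 1 - β := by linarith
  have hE0 : 0 < E := by
    have : 0 ≤ (2 * β / α) ^ (1 / (1 - β)) := by positivity
    linarith
  refine ⟨2 * (2 + b) / (α * β) + (2 * E / α + E) + (1 + b) / α, by positivity, ?_⟩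
  intro n _ _ _ A c hA hc hc1 hnorm hinv K hK
  set a : ℕ → ℝ := fun j => α * ((j : ℝ) + b) ^ (-β) with ha
  have hK1 : (1:ℝ) ≤ K := by exact_mod_cast hK
  have hxpos : ∀ k : ℕ, (0:ℝ) < (k:ℝ) + b := fun k => by positivity
  have hau : ∀ k, a k = α / ((k:ℝ) + b) ^ β := by
    intro k
    simp only [ha]
    rw [Real.rpow_neg (hxpos k).le]
    rfl
  have hapos : ∀ k, 0 < a k := fun k => by
    rw [hau]; exact div_pos hα (Real.rpow_pos_of_pos (hxpos k) _)
  have hanti : Antitone a := by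
    intro i j hij
    rw [hau, hau]
    have hij' : (i:ℝ) ≤ j := by exact_mod_cast hij
    have h2 : ((i:ℝ) + b) ^ β ≤ ((j:ℝ) + b) ^ β :=
      Real.rpow_le_rpow (hxpos i).le (by linarith) hβ0.le
    exact div_le_div_of_nonneg_left hα.le (Real.rpow_pos_of_pos (hxpos i) _) h2
  have h1 : ∀ j, 0 ≤ 1 - c * a j := by
    intro j
    refine le_trans ?_ (hnorm j)
    unfold normInf
    obtain ⟨i⟩ := (inferInstance : Nonempty n)
    exact le_trans (Finset.sum_nonneg fun j _ => abs_nonneg _)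
      (Finset.le_sup' (fun i => ∑ k, |((1 : Matrix n n ℝ)
              - (α * ((j : ℝ) + b) ^ (-β)) • A) i k|) (Finset.mem_univ i))
  have hdev := Finset.sum_le_sum (fun i (hi : i ∈ Finset.Icc 1 K) =>
    dev_le A hA a hanti c hnorm hinv i K (Finset.mem_Icc.1 hi).2)
  rw [Finset.sum_add_distrib, ← Finset.sum_mul] at hdev
  have hcomm : ∑ i ∈ Finset.Icc 1 K, ∑ k ∈ Finset.Icc (i+1) K,
      (a i - a k) * ∏ j ∈ Finset.Ico (i+1) k, (1 - c * a j)
      = ∑ k ∈ Finset.Icc 1 K, ∑ i ∈ Finset.Ico 1 k,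
      (a i - a k) * ∏ j ∈ Finset.Ico (i+1) k, (1 - c * a j) := by
    apply Finset.sum_comm'
    intro i k
    simp only [Finset.mem_Icc, Finset.mem_Ico]
    omega
  rw [hcomm] at hdev
  have hsc := scalar_bound α b β hα hb hβ0 hβ1 E hE c hc hc1 (fun k => ((k:ℝ)+b)^β) a
    (fun _ => rfl) hau hanti h1 K
  have hS := S_bound a hanti hapos c hc h1 K
  have hIc : Finset.Ico 1 (K+1) = Finset.Icc 1 K := by ext; simp
  rw [hIc] at hS
  have hS2 := mul_le_mul_of_nonneg_right hS (show 0 ≤ 1 / c by positivity)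
  have hlastb : 1 / (c * a K) * (1 / c) ≤ (1 + b) / α * ((K:ℝ)^β / c^2) := by
    have h2 : ((K:ℝ)+b)^β ≤ (1+b) * (K:ℝ)^β := by
      refine (Real.rpow_le_rpow (hxpos K).le ?_ hβ0.le).trans
        (rpow_mul_le (1+b) K β (by linarith) (by linarith) hβ1)
      nlinarith
    have h3 := Real.rpow_pos_of_pos (hxpos K) β
    calc 1 / (c * a K) * (1 / c) = ((K:ℝ)+b)^β / (α * c^2) := by
          rw [hau]; field_simp
      _ ≤ ((1+b) * (K:ℝ)^β) / (α * c^2) := by gcongr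
      _ = _ := by field_simp
  have hX : 0 ≤ (1 + Real.log (K : ℝ)) * c ^ (-(2 - β) / (1 - β)) := by
    have := Real.log_nonneg hK1
    positivity
  have hY : 0 ≤ (K : ℝ) ^ β / c ^ 2 := by positivity
  generalize (1 + Real.log (K : ℝ)) * c ^ (-(2 - β) / (1 - β)) = X at *
  generalize (K : ℝ) ^ β / c ^ 2 = Y at *
  have q1 : 0 ≤ 2 * (2 + b) / (α * β) * X := by positivity
  have q2 : 0 ≤ (2 * E / α + E) * Y := by positivity
  have q3 : 0 ≤ (1 + b) / α * X := by positivity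
  linarith
end

section
/- Lipschitz continuity of the Poisson-equation solution in Q (claim in the proof of Theorem 1). In the finite MDP setting with the asynchronous Q-learning operator F, let Ỹ := S×A×S, let P̃ be a row-stochastic matrix indexed by Ỹ with stationary distribution μ̃, and suppose there exist c₀ > 0 and κ ∈ (0,1) such that ∑_{y'∈Ỹ} |(P̃^t)(y,y') − μ̃(y')| ≤ c₀ κ^t for all y ∈ Ỹ and all integers t ≥ 0. For Q : S×A → ℝ define X_Q(y) := ∑_{t=0}^∞ ∑_{y'∈Ỹ} ((P̃^t)(y,y') − μ̃(y')) F(Q,y') (the series converges absolutely). Then for all Q, Q' : S×A → ℝ and every y ∈ Ỹ: ‖X_Q(y) − X_{Q'}(y)‖∞ ≤ (2c₀/(1−κ)) · ‖Q − Q'‖∞, where ‖Q‖∞ = max_{(s,a)} |Q(s,a)|. -/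
open Finset

/-- Lipschitz continuity of the Poisson-equation solution in Q
(claim in the proof of Theorem 1). -/
theorem lipschitz_poisson_solution_in_Q
    {S A : Type*} [Fintype S] [Fintype A] [Nonempty S] [Nonempty A]
    [DecidableEq S] [DecidableEq A]
    (P : S → A → S → ℝ)
    (hPnn : ∀ s a s', 0 ≤ P s a s')
    (hPsum : ∀ s a, ∑ s', P s a s' = 1)
    (r : S → A → ℝ) (γ : ℝ) (hγ0 : 0 ≤ γ) (hγ1 : γ < 1)
    -- asynchronous Q-learning operator
    (F : (S → A → ℝ) → (S × A × S) → (S → A → ℝ))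
    (hF : ∀ Q (y : S × A × S) s a, F Q y s a =
      (if (y.1, y.2.1) = (s, a) then
        r y.1 y.2.1 + γ * (univ.sup' univ_nonempty (fun a' => Q y.2.2 a')) - Q y.1 y.2.1
       else 0) + Q s a)
    -- the Markov chain on transition samples
    (Pt : Matrix (S × A × S) (S × A × S) ℝ)
    (hPtnn : ∀ y y', 0 ≤ Pt y y') (hPtsum : ∀ y, ∑ y', Pt y y' = 1)
    (μ : S × A × S → ℝ) (hμnn : ∀ y, 0 ≤ μ y) (hμsum : ∑ y, μ y = 1)
    (hstat : ∀ y', ∑ y, μ y * Pt y y' = μ y')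
    (c₀ κ : ℝ) (hc₀ : 0 < c₀) (hκ0 : 0 < κ) (hκ1 : κ < 1)
    (hmix : ∀ (y : S × A × S) (t : ℕ), ∑ y', |(Pt ^ t) y y' - μ y'| ≤ c₀ * κ ^ t)
    -- the Poisson-equation solutions X_Q
    (X : (S → A → ℝ) → (S × A × S) → (S → A → ℝ))
    (hX : ∀ (Q : S → A → ℝ) (y : S × A × S) (s : S) (a : A),
      X Q y s a = ∑' t : ℕ, ∑ y', ((Pt ^ t) y y' - μ y') * F Q y' s a) :
    ∀ (Q Q' : S → A → ℝ) (y : S × A × S),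
      univ.sup' univ_nonempty
          (fun sa : S × A => |X Q y sa.1 sa.2 - X Q' y sa.1 sa.2|) ≤
        (2 * c₀ / (1 - κ)) *
          univ.sup' univ_nonempty (fun sa : S × A => |Q sa.1 sa.2 - Q' sa.1 sa.2|) := by
  intro Q Q' y
  set D := univ.sup' univ_nonempty (fun sa : S × A => |Q sa.1 sa.2 - Q' sa.1 sa.2|) with hD
  have hQD : ∀ s a, |Q s a - Q' s a| ≤ D := fun s a =>
    Finset.le_sup' (fun sa : S × A => |Q sa.1 sa.2 - Q' sa.1 sa.2|) (mem_univ (s, a))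
  have hD0 : 0 ≤ D := (abs_nonneg _).trans (hQD (Classical.arbitrary S) (Classical.arbitrary A))
  have hκ : 0 < 1 - κ := by linarith
  have key : ∀ (G : S × A × S → ℝ) (C : ℝ), (∀ y', |G y'| ≤ C) → ∀ t : ℕ,
      ‖∑ y', ((Pt ^ t) y y' - μ y') * G y'‖ ≤ c₀ * C * κ ^ t := by
    intro G C hG t
    have hC : 0 ≤ C := (abs_nonneg _).trans (hG y)
    rw [Real.norm_eq_abs]
    calc |∑ y', ((Pt ^ t) y y' - μ y') * G y'|
        ≤ ∑ y', |((Pt ^ t) y y' - μ y') * G y'| := Finset.abs_sum_le_sum_abs _ _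
      _ ≤ ∑ y', |(Pt ^ t) y y' - μ y'| * C := by
          refine Finset.sum_le_sum fun y' _ => ?_
          rw [abs_mul]
          exact mul_le_mul_of_nonneg_left (hG y') (abs_nonneg _)
      _ = (∑ y', |(Pt ^ t) y y' - μ y'|) * C := by rw [Finset.sum_mul]
      _ ≤ (c₀ * κ ^ t) * C := mul_le_mul_of_nonneg_right (hmix y t) hC
      _ = c₀ * C * κ ^ t := by ring
  have hgeo : ∀ C : ℝ, HasSum (fun t : ℕ => c₀ * C * κ ^ t) (c₀ * C * (1 - κ)⁻¹) := fun C =>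
    (hasSum_geometric_of_lt_one hκ0.le hκ1).mul_left _
  have hsum : ∀ (G : S × A × S → ℝ),
      Summable (fun t : ℕ => ∑ y', ((Pt ^ t) y y' - μ y') * G y') := fun G =>
    Summable.of_norm_bounded (hgeo (∑ z, |G z|)).summable
      (key G _ fun y' => Finset.single_le_sum (f := fun z => |G z|)
        (fun z _ => abs_nonneg _) (mem_univ y'))
  have hsup : ∀ (Q₁ Q₂ : S → A → ℝ), (∀ s a, |Q₁ s a - Q₂ s a| ≤ D) → ∀ s,
      univ.sup' univ_nonempty (fun a => Q₁ s a) ≤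
        univ.sup' univ_nonempty (fun a => Q₂ s a) + D := by
    intro Q₁ Q₂ h s
    refine Finset.sup'_le _ _ fun a _ => ?_
    have h1 := (abs_le.1 (h s a)).2
    have h2 := Finset.le_sup' (fun a => Q₂ s a) (mem_univ a)
    linarith
  have hFD : ∀ y' s a, |F Q y' s a - F Q' y' s a| ≤ D := by
    intro y' s a
    rw [hF, hF]
    split_ifs with h
    · obtain ⟨h1, h2⟩ := Prod.mk.inj h
      rw [h1, h2]
      have e1 := hsup Q Q' hQD y'.2.2
      have e2 := hsup Q' Q (fun s a => by rw [abs_sub_comm]; exact hQD s a) y'.2.2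
      generalize univ.sup' univ_nonempty (fun a' => Q y'.2.2 a') = m at *
      generalize univ.sup' univ_nonempty (fun a' => Q' y'.2.2 a') = m' at *
      have : r s a + γ * m - Q s a + Q s a - (r s a + γ * m' - Q' s a + Q' s a)
          = γ * (m - m') := by ring
      rw [this, abs_mul, abs_of_nonneg hγ0]
      have e3 : |m - m'| ≤ D := abs_le.2 ⟨by linarith, by linarith⟩
      calc γ * |m - m'| ≤ 1 * |m - m'| := mul_le_mul_of_nonneg_right hγ1.le (abs_nonneg _)
        _ ≤ D := by rw [one_mul]; exact e3
    · simpa using hQD s a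
  refine Finset.sup'_le _ _ fun sa _ => ?_
  rw [hX, hX, ← (hsum _).tsum_sub (hsum _)]
  have e : ∀ t : ℕ, (∑ y', ((Pt ^ t) y y' - μ y') * F Q y' sa.1 sa.2)
      - (∑ y', ((Pt ^ t) y y' - μ y') * F Q' y' sa.1 sa.2)
      = ∑ y', ((Pt ^ t) y y' - μ y') * (F Q y' sa.1 sa.2 - F Q' y' sa.1 sa.2) := by
    intro t
    rw [← Finset.sum_sub_distrib]
    exact Finset.sum_congr rfl fun _ _ => by ring
  simp only [e]
  have hb := tsum_of_norm_bounded (hgeo D) (key _ D fun y' => hFD y' sa.1 sa.2)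
  rw [Real.norm_eq_abs] at hb
  refine hb.trans ?_
  have : 0 ≤ c₀ * D * (1 - κ)⁻¹ := by positivity
  have e4 : 2 * c₀ / (1 - κ) * D = 2 * (c₀ * D * (1 - κ)⁻¹) := by ring
  rw [e4]
  linarith
end
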